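/- arXiv:1403.4344 — 8 statements merged into one kernel-verified Lean document; each statement's English description precedes it below -/
import Mathlib

section
/- Let H be a finite-dimensional complex inner product space, U a unitary operator on H, P an orthogonal projection on H, and ψ₀ ∈ H. If the set Z = {n ∈ ℕ | P U^n ψ₀ = 0} is infinite, then there exist integers p ≥ 1 and r ≥ 0 such that P U^{p n + r} ψ₀ = 0 for every n ∈ ℕ (i.e., Z contains the full arithmetic progression {p n + r : n ∈ ℕ}). -/
open scoped InnerProductSpace

/-!
The Skolem–Mahler–Lech argument. Passing to the stable range of the operator makes it invertible,
and in matrix form it is then defined, with its inverse, over a finitely generated domain `R` of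
characteristic zero. By Noether normalization and the infinite transcendence degree of `ℚ_[p]`
over `ℚ`, for a suitable prime `p` such an `R` embeds in a finite free `ℤ_[p]`-algebra. Over such
an algebra some power of the matrix has the form `1 + p² B`. Along each residue class of
exponents, the coordinates of the orbit are therefore Newton series
`∑ i, (n choose i) p^(2i) d i`. On some class there are infinitely many zeros, and each such series
then vanishes identically: it is approximated by polynomials with integral zeros and small higher
coefficients, and an ultrametric polynomial with `k` zeros in the unit ball is bounded there by its
coefficients of index at least `k`.
-/

/-- The Newton series `∑ i, (n choose i) d i` with coefficients `d`, evaluated at a natural number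
`n`. The sum is finite because `n choose i` vanishes for `i > n`. -/
def newtonSeries {M : Type*} [AddCommMonoid M] (d : ℕ → M) (n : ℕ) : M :=
  ∑ i ∈ Finset.range (n + 1), n.choose i • d i

theorem map_newtonSeries {M M' F : Type*} [AddCommMonoid M] [AddCommMonoid M'] [FunLike F M M']
    [AddMonoidHomClass F M M'] (f : F) (d : ℕ → M) (n : ℕ) :
    f (newtonSeries d n) = newtonSeries (fun i => f (d i)) n := by
  simp only [newtonSeries, map_sum, map_nsmul]

theorem one_add_pow_eq_newtonSeries {R : Type*} [Semiring R] (b : R) (n : ℕ) :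
    (1 + b) ^ n = newtonSeries (fun i => b ^ i) n := by
  rw [add_comm, (Commute.one_right b).add_pow]
  simp only [newtonSeries, one_pow, mul_one, nsmul_eq_mul, Nat.cast_comm]

section Ultrametric

open Polynomial
open scoped Nat

theorem newtonSeries_eq_eval_sum_descPochhammer {K : Type*} [Field K] [CharZero K] (a : ℕ → K)
    {n m : ℕ} (h : n < m) :
    newtonSeries a n =
      (∑ i ∈ Finset.range m, C (a i / i !) * descPochhammer K i).eval (n : K) := by
  simp only [newtonSeries, eval_finsetSum, eval_mul, eval_C, descPochhammer_eval_eq_descFactorial]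
  refine (Finset.sum_congr rfl fun i _ => ?_).trans
    (Finset.sum_subset (Finset.range_subset_range.2 h) fun i _ hi => ?_)
  · have : (i ! : K) ≠ 0 := Nat.cast_ne_zero.2 i.factorial_ne_zero
    rw [Nat.descFactorial_eq_factorial_mul_choose, Nat.cast_mul, nsmul_eq_mul]
    field_simp
  · rw [Nat.descFactorial_of_lt (by simpa using hi), Nat.cast_zero, mul_zero]

variable {K : Type*} [NormedField K] [IsUltrametricDist K] {ε : ℝ}

theorem norm_eval_le_of_forall_norm_coeff_le (hε : 0 ≤ ε) {F : K[X]}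
    (hF : ∀ j, ‖F.coeff j‖ ≤ ε) {x : K} (hx : ‖x‖ ≤ 1) : ‖F.eval x‖ ≤ ε := by
  rw [eval_eq_sum_range]
  refine IsUltrametricDist.norm_sum_le_of_forall_le_of_nonneg hε fun i _ => ?_
  rw [norm_mul, norm_pow]
  exact (mul_le_of_le_one_right (norm_nonneg _) (pow_le_one₀ (norm_nonneg x) hx)).trans (hF i)

theorem norm_coeff_divByMonic_X_sub_C_le (hε : 0 ≤ ε) {k : ℕ} {F : K[X]}
    (hF : ∀ j, k + 1 ≤ j → ‖F.coeff j‖ ≤ ε) {t : K} (ht : ‖t‖ ≤ 1) {j : ℕ} (hj : k ≤ j) :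
    ‖(F /ₘ (X - C t)).coeff j‖ ≤ ε := by
  rw [coeff_divByMonic_X_sub_C]
  refine IsUltrametricDist.norm_sum_le_of_forall_le_of_nonneg hε fun i hi => ?_
  have hki : k + 1 ≤ i := by have := (Finset.mem_Icc.1 hi).1; omega
  rw [norm_mul, norm_pow]
  exact (mul_le_of_le_one_left (norm_nonneg _) (pow_le_one₀ (norm_nonneg t) ht)).trans (hF i hki)

/-- Dividing `F` by `X - C t` for a root `t` in the unit ball trades one root for one coefficient
that need not be small. -/
theorem norm_eval_le_of_card_roots (hε : 0 ≤ ε) {T : Finset K} (hT : ∀ t ∈ T, ‖t‖ ≤ 1)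
    {F : K[X]} (hroot : ∀ t ∈ T, F.IsRoot t) (hcoeff : ∀ j, T.card ≤ j → ‖F.coeff j‖ ≤ ε)
    {x : K} (hx : ‖x‖ ≤ 1) : ‖F.eval x‖ ≤ ε := by
  classical
  induction T using Finset.induction_on generalizing F with
  | empty => exact norm_eval_le_of_forall_norm_coeff_le hε (fun j => hcoeff j (Nat.zero_le j)) hx
  | insert t T ht ih =>
    simp only [Finset.forall_mem_insert, Finset.card_insert_of_notMem ht] at hT hroot hcoeff
    have hfactor : (X - C t) * (F /ₘ (X - C t)) = F := mul_divByMonic_eq_iff_isRoot.2 hroot.1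
    have hquot : ‖(F /ₘ (X - C t)).eval x‖ ≤ ε := by
      refine ih hT.2 (fun s hs => ?_) fun j => norm_coeff_divByMonic_X_sub_C_le hε hcoeff hT.1
      have hs0 := hroot.2 s hs
      rw [← hfactor, IsRoot, eval_mul, mul_eq_zero, eval_sub, eval_X, eval_C, sub_eq_zero] at hs0
      exact hs0.resolve_left fun hst => ht (hst ▸ hs)
    have hlin : ‖x - t‖ ≤ 1 := by
      rw [sub_eq_add_neg]
      exact (IsUltrametricDist.norm_add_le_max x (-t)).trans
        (max_le hx ((norm_neg t).trans_le hT.1))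
    rw [← hfactor, eval_mul, norm_mul, eval_sub, eval_X, eval_C]
    exact (mul_le_of_le_one_left (norm_nonneg _) hlin).trans hquot

theorem norm_coeff_descPochhammer_le_one (i j : ℕ) : ‖(descPochhammer K i).coeff j‖ ≤ 1 := by
  rw [← descPochhammer_map (Int.castRingHom K), coeff_map]
  exact IsUltrametricDist.norm_intCast_le_one K _

theorem norm_coeff_sum_descPochhammer_le (hε : 0 ≤ ε) {c : ℕ → K} {j : ℕ}
    (hc : ∀ i, j ≤ i → ‖c i‖ ≤ ε) (m : ℕ) :
    ‖(∑ i ∈ Finset.range m, C (c i) * descPochhammer K i).coeff j‖ ≤ ε := by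
  simp only [finsetSum_coeff, coeff_C_mul]
  refine IsUltrametricDist.norm_sum_le_of_forall_le_of_nonneg hε fun i _ => ?_
  rcases lt_or_ge i j with hij | hji
  · rwa [coeff_eq_zero_of_natDegree_lt (by rwa [descPochhammer_natDegree]), mul_zero, norm_zero]
  · rw [norm_mul]
    exact (mul_le_of_le_one_right (norm_nonneg _) (norm_coeff_descPochhammer_le_one i j)).trans
      (hc i hji)

open Filter Topology in
theorem newtonSeries_eq_zero_of_infinite_zeros [CharZero K] {a : ℕ → K}
    (ha : Tendsto (fun i => a i / (i ! : K)) atTop (𝓝 0))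
    (hzeros : {n | newtonSeries a n = 0}.Infinite) (n : ℕ) : newtonSeries a n = 0 := by
  refine norm_le_zero_iff.1 (le_of_forall_pos_le_add fun ε hε => ?_)
  rw [zero_add]
  obtain ⟨k, hk⟩ : ∃ k, ∀ i, k ≤ i → ‖a i / (i ! : K)‖ ≤ ε :=
    eventually_atTop.1 ((tendsto_zero_iff_norm_tendsto_zero.1 ha).eventually_le_const hε)
  obtain ⟨T, hTzeros, hTcard⟩ := hzeros.exists_subset_card_eq k
  obtain ⟨m, hm⟩ : ∃ m, ∀ t ∈ insert n T, t < m :=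
    ⟨(insert n T).sup id + 1, fun t ht => Nat.lt_succ_of_le (Finset.le_sup (f := id) ht)⟩
  rw [newtonSeries_eq_eval_sum_descPochhammer a (hm n (by simp))]
  refine norm_eval_le_of_card_roots hε.le (T := T.map Nat.castEmbedding) ?_ ?_
    (fun j hj => norm_coeff_sum_descPochhammer_le hε.le (fun i hi => hk i ?_) m)
    (IsUltrametricDist.norm_natCast_le_one K n)
  · simp [IsUltrametricDist.norm_natCast_le_one K]
  · simp only [Finset.forall_mem_map, Nat.castEmbedding_apply]
    intro t ht
    rw [IsRoot, ← newtonSeries_eq_eval_sum_descPochhammer a (hm t (by simp [ht]))]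
    exact hTzeros ht
  · rw [Finset.card_map, hTcard] at hj
    exact hj.trans hi

end Ultrametric

section Padic

open Filter Topology
open scoped Nat

variable {p : ℕ} [Fact p.Prime]

theorem inv_pow_le_norm_factorial (i : ℕ) : ((p : ℝ)⁻¹) ^ i ≤ ‖(i ! : ℚ_[p])‖ := by
  have hp : (1 : ℝ) ≤ p := by exact_mod_cast (Fact.out : p.Prime).one_lt.le
  have hne : (i ! : ℚ_[p]) ≠ 0 := Nat.cast_ne_zero.2 i.factorial_ne_zero
  rw [Padic.norm_eq_zpow_neg_valuation hne, Padic.valuation_natCast, zpow_neg, zpow_natCast,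
    inv_pow]
  exact inv_anti₀ (by positivity) (pow_le_pow_right₀ hp (padicValNat_factorial_le p i))

/-- The factor `2` makes this hold also for `p = 2`, where `2 ^ i / i !` does not tend to `0`. -/
theorem tendsto_pow_two_mul_mul_div_factorial (d : ℕ → ℤ_[p]) :
    Tendsto (fun i => (p : ℚ_[p]) ^ (2 * i) * d i / (i ! : ℚ_[p])) atTop (𝓝 0) := by
  have hp : (1 : ℝ) < p := by exact_mod_cast (Fact.out : p.Prime).one_lt
  refine squeeze_zero_norm (fun i => ?_)
    (tendsto_pow_atTop_nhds_zero_of_lt_one (by positivity) (inv_lt_one_of_one_lt₀ hp))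
  have hpos : 0 < ‖(i ! : ℚ_[p])‖ := norm_pos_iff.2 (Nat.cast_ne_zero.2 i.factorial_ne_zero)
  rw [norm_div, norm_mul, norm_pow, Padic.norm_p, div_le_iff₀ hpos]
  calc ((p : ℝ)⁻¹) ^ (2 * i) * ‖(d i : ℚ_[p])‖ ≤ ((p : ℝ)⁻¹) ^ (2 * i) :=
        mul_le_of_le_one_right (by positivity) (d i).norm_le_one
    _ = ((p : ℝ)⁻¹) ^ i * ((p : ℝ)⁻¹) ^ i := by rw [two_mul, pow_add]
    _ ≤ ((p : ℝ)⁻¹) ^ i * ‖(i ! : ℚ_[p])‖ := by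
        gcongr
        exact inv_pow_le_norm_factorial i

theorem newtonSeries_pow_smul_eq_zero_of_infinite_zeros {M : Type*} [AddCommGroup M]
    [Module ℤ_[p] M] [Module.Free ℤ_[p] M] {d : ℕ → M}
    (hzeros : {n | newtonSeries (fun i => (p : ℤ_[p]) ^ (2 * i) • d i) n = 0}.Infinite) (n : ℕ) :
    newtonSeries (fun i => (p : ℤ_[p]) ^ (2 * i) • d i) n = 0 := by
  let b := Module.Free.chooseBasis ℤ_[p] M
  refine b.ext_elem fun c => PadicInt.ext ?_
  let coord : M →ₗ[ℤ_[p]] ℚ_[p] := Algebra.linearMap ℤ_[p] ℚ_[p] ∘ₗ b.coord c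
  have hcoord : ∀ i, coord ((p : ℤ_[p]) ^ (2 * i) • d i) = (p : ℚ_[p]) ^ (2 * i) * b.repr (d i) c :=
    fun i => by simp [coord, Algebra.smul_def]
  change coord _ = coord 0
  rw [map_zero, map_newtonSeries]
  refine newtonSeries_eq_zero_of_infinite_zeros ?_ (hzeros.mono fun m hm => ?_) n
  · simpa only [hcoord] using tendsto_pow_two_mul_mul_div_factorial fun i => b.repr (d i) c
  · exact (map_newtonSeries coord _ m).symm.trans ((congrArg coord hm).trans (map_zero coord))

end Padic

section UnitPower

theorem exists_pow_sub_one_mem_smul_top {R E : Type*} [CommRing R] [Ring E] [Algebra R E]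
    [Module.Finite R E] (I : Ideal R) [Finite (R ⧸ I)] (A : Eˣ) :
    ∃ N, 1 ≤ N ∧ (A : E) ^ N - 1 ∈ I • (⊤ : Submodule R E) := by
  let J : Submodule R E := I • ⊤
  have hJmul : ∀ x, ∀ y ∈ J, x * y ∈ J := fun x =>
    Submodule.smul_top_le_comap_smul_top I (LinearMap.mulLeft R x)
  have : Finite (E ⧸ J) := by
    have : Finite (E ⧸ (⊤ : Submodule R E)) := inferInstance
    exact Submodule.finite_quotient_smul I Module.Finite.fg_top
  obtain ⟨i, j, hij, hpow⟩ : ∃ i j : ℕ, i < j ∧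
      (Submodule.Quotient.mk ((A : E) ^ j) : E ⧸ J) = Submodule.Quotient.mk ((A : E) ^ i) := by
    obtain ⟨i, j, hne, h⟩ := Finite.exists_ne_map_eq_of_infinite
      fun n : ℕ => (Submodule.Quotient.mk ((A : E) ^ n) : E ⧸ J)
    rcases hne.lt_or_gt with hlt | hlt
    exacts [⟨i, j, hlt, h.symm⟩, ⟨j, i, hlt, h⟩]
  refine ⟨j - i, by omega, ?_⟩
  have hcancel : ((A⁻¹ ^ i : Eˣ) : E) * ((A : E) ^ j - (A : E) ^ i) = (A : E) ^ (j - i) - 1 := by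
    obtain ⟨k, rfl⟩ := Nat.exists_eq_add_of_le hij.le
    rw [inv_pow, mul_sub, ← Units.val_pow_eq_pow_val, ← Units.val_pow_eq_pow_val, pow_add,
      Units.val_mul, Units.inv_mul_cancel_left, Units.inv_mul, Nat.add_sub_cancel_left,
      Units.val_pow_eq_pow_val]
  exact hcancel ▸ hJmul _ _ ((Submodule.Quotient.eq J).1 hpow)

theorem exists_pow_eq_one_add_smul {R E : Type*} [CommRing R] [Ring E] [Algebra R E]
    [Module.Finite R E] (a : R) [Finite (R ⧸ Ideal.span {a})] (A : Eˣ) :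
    ∃ N, 1 ≤ N ∧ ∃ B : E, (A : E) ^ N = 1 + a • B := by
  obtain ⟨N, hN, hmem⟩ := exists_pow_sub_one_mem_smul_top (Ideal.span {a}) A
  rw [Submodule.ideal_span_singleton_smul] at hmem
  obtain ⟨B, -, hB⟩ := (Submodule.mem_smul_pointwise_iff_exists _ _ _).1 hmem
  exact ⟨N, hN, B, by rw [hB, add_sub_cancel]⟩

instance finite_padicInt_quotient_span_pow (p n : ℕ) [Fact p.Prime] :
    Finite (ℤ_[p] ⧸ Ideal.span {(p : ℤ_[p]) ^ n}) := by
  have : NeZero (p ^ n) := ⟨pow_ne_zero n (Fact.out : p.Prime).ne_zero⟩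
  rw [← PadicInt.ker_toZModPow]
  exact Finite.of_injective _ (RingHom.kerLift_injective (PadicInt.toZModPow (p := p) n))

end UnitPower

theorem exists_infinite_setOf_mul_add_mem {Z : Set ℕ} (hZ : Z.Infinite) {N : ℕ} (hN : 1 ≤ N) :
    ∃ r, {m | N * m + r ∈ Z}.Infinite := by
  by_contra! hfin
  refine hZ (((Set.finite_lt_nat N).biUnion fun r _ =>
    (hfin r).image fun m => N * m + r).subset fun n hn => ?_)
  simp only [Set.mem_iUnion]
  exact ⟨n % N, Nat.mod_lt _ hN, n / N, by simpa [Nat.div_add_mod] using hn, Nat.div_add_mod n N⟩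

theorem exists_progression_map_units_pow_eq_zero {p : ℕ} [Fact p.Prime] {E M : Type*} [Ring E]
    [Algebra ℤ_[p] E] [Module.Finite ℤ_[p] E] [AddCommGroup M] [Module ℤ_[p] M]
    [Module.Free ℤ_[p] M] (A : Eˣ) (f : E →ₗ[ℤ_[p]] M)
    (hzeros : {n : ℕ | f ((A : E) ^ n) = 0}.Infinite) :
    ∃ N r : ℕ, 1 ≤ N ∧ ∀ n, f ((A : E) ^ (N * n + r)) = 0 := by
  obtain ⟨N, hN, B, hB⟩ := exists_pow_eq_one_add_smul ((p : ℤ_[p]) ^ 2) A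
  obtain ⟨r, hr⟩ := exists_infinite_setOf_mul_add_mem hzeros hN
  have hexpand : ∀ m, f ((A : E) ^ (N * m + r)) =
      newtonSeries (fun i => (p : ℤ_[p]) ^ (2 * i) • f (B ^ i * (A : E) ^ r)) m := by
    intro m
    let g : E →ₗ[ℤ_[p]] M := f ∘ₗ LinearMap.mulRight ℤ_[p] ((A : E) ^ r)
    calc f ((A : E) ^ (N * m + r)) = g ((1 + (p : ℤ_[p]) ^ 2 • B) ^ m) := by
          simp only [g, pow_add, pow_mul, hB, LinearMap.comp_apply, LinearMap.mulRight_apply]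
      _ = newtonSeries (fun i => g (((p : ℤ_[p]) ^ 2 • B) ^ i)) m := by
          rw [one_add_pow_eq_newtonSeries, map_newtonSeries]
      _ = _ := by
          simp only [g, smul_pow, ← pow_mul, map_smul, LinearMap.comp_apply,
            LinearMap.mulRight_apply]
  refine ⟨N, r, hN, fun n => (hexpand n).trans ?_⟩
  refine newtonSeries_pow_smul_eq_zero_of_infinite_zeros (hr.mono fun m hm => ?_) n
  exact (hexpand m).symm.trans hm

section Transcendence

theorem uncountable_index_of_isTranscendenceBasis {ι R A : Type*} [CommRing R]
    [Countable R] [CommRing A] [IsDomain A] [Uncountable A] [Algebra R A] {x : ι → A}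
    (hx : IsTranscendenceBasis R x) : Uncountable ι := by
  rw [← not_countable_iff]
  intro _
  have : Countable (Algebra.adjoin R (Set.range x)) := by
    rw [← Cardinal.mk_le_aleph0_iff, ← Cardinal.lift_le_aleph0]
    refine (Algebra.lift_cardinalMk_adjoin_le R (Set.range x)).trans ?_
    have := (Set.countable_range x).le_aleph0
    simp [this]
  have := (algebraMap R A).domain_nontrivial
  have := hx.isAlgebraic
  exact Set.not_countable_univ <| (Algebraic.countable (Algebra.adjoin R (Set.range x)) A).mono
    fun a _ => Algebra.IsAlgebraic.isAlgebraic a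

variable (p : ℕ) [Fact p.Prime]

instance uncountable_padic : Uncountable ℚ_[p] :=
  Cardinal.aleph0_lt_mk_iff.1 <|
    Cardinal.aleph0_lt_continuum.trans_le (continuum_le_cardinal_of_nontriviallyNormedField _)

theorem isAlgebraic_padic_over_adjoin_padicInt (R : Type*) [CommRing R] [Algebra R ℚ_[p]] :
    Algebra.IsAlgebraic (Algebra.adjoin R (Set.range ((↑) : ℤ_[p] → ℚ_[p]))) ℚ_[p] := by
  have hint : ∀ x : ℚ_[p], ‖x‖ ≤ 1 →
      IsAlgebraic (Algebra.adjoin R (Set.range ((↑) : ℤ_[p] → ℚ_[p]))) x := fun x hx =>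
    isAlgebraic_algebraMap (⟨x, Algebra.subset_adjoin ⟨⟨x, hx⟩, rfl⟩⟩ :
      Algebra.adjoin R (Set.range ((↑) : ℤ_[p] → ℚ_[p])))
  refine ⟨fun x => ?_⟩
  rcases le_total ‖x‖ 1 with hx | hx
  · exact hint x hx
  · have hinv : ‖x⁻¹‖ ≤ 1 := norm_inv x ▸ inv_le_one_of_one_le₀ hx
    exact inv_inv x ▸ (hint x⁻¹ hinv).inv

theorem exists_algebraicIndependent_padicInt (ι : Type*) [Countable ι] :
    ∃ y : ι → ℤ_[p], AlgebraicIndependent ℚ fun i => (y i : ℚ_[p]) := by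
  have := isAlgebraic_padic_over_adjoin_padicInt p ℚ
  obtain ⟨t, ht, hbasis⟩ := exists_isTranscendenceBasis_subset (R := ℚ)
    (Set.range ((↑) : ℤ_[p] → ℚ_[p]))
  have := uncountable_index_of_isTranscendenceBasis hbasis
  obtain ⟨f, hf⟩ := exists_injective_nat ι
  let e : ι ↪ t := (⟨f, hf⟩ : ι ↪ ℕ).trans (Infinite.natEmbedding t)
  choose y hy using fun i => ht (e i).2
  refine ⟨y, ?_⟩
  simp only [hy]
  exact hbasis.1.comp e e.injective

end Transcendence

section Embedding

theorem exists_injective_extension_of_isIntegral {A R L : Type*} [CommRing A] [IsDomain A]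
    [CommRing R] [IsDomain R] [Field L] [IsAlgClosed L] {g : A →+* R} (hg : g.IsIntegral)
    (hginj : Function.Injective g) {h : A →+* L} (hinj : Function.Injective h) :
    ∃ φ : R →+* L, Function.Injective φ ∧ φ.comp g = h := by
  let := g.toAlgebra
  let := h.toAlgebra
  have : FaithfulSMul A R := (faithfulSMul_iff_algebraMap_injective A R).2 hginj
  have : FaithfulSMul A L := (faithfulSMul_iff_algebraMap_injective A L).2 hinj
  have : Algebra.IsIntegral A R := ⟨hg⟩
  let φ : R →ₐ[A] L := IsAlgClosed.lift
  have hcomp : (φ : R →+* L).comp g = h := φ.comp_algebraMap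
  refine ⟨φ, (RingHom.injective_iff_ker_eq_bot _).2 (Ideal.eq_bot_of_comap_eq_bot (R := A) ?_),
    hcomp⟩
  change Ideal.comap g (RingHom.ker (φ : R →+* L)) = ⊥
  rw [RingHom.comap_ker, hcomp]
  exact (RingHom.injective_iff_ker_eq_bot h).1 hinj

theorem exists_prime_forall_not_dvd_den {s : Set ℚ} (hs : s.Finite) :
    ∃ p : ℕ, p.Prime ∧ ∀ x ∈ s, ¬ p ∣ x.den := by
  obtain ⟨b, hb⟩ := (hs.image Rat.den).bddAbove
  obtain ⟨p, hpb, hp⟩ := Nat.exists_infinite_primes (b + 1)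
  refine ⟨p, hp, fun x hx hdvd => ?_⟩
  have hxb : x.den ≤ b := hb (Set.mem_image_of_mem _ hx)
  have hle := Nat.le_of_dvd x.den_pos hdvd
  omega

open MvPolynomial in
theorem norm_aeval_le_one_of_forall_not_dvd_den {p : ℕ} [Fact p.Prime] {σ : Type*}
    (y : σ → ℤ_[p]) {c : MvPolynomial σ ℚ} (hc : ∀ x ∈ c.coeffs, ¬ p ∣ x.den) :
    ‖aeval (fun i => (y i : ℚ_[p])) c‖ ≤ 1 := by
  rw [aeval_def, eval₂_eq]
  refine IsUltrametricDist.norm_sum_le_of_forall_le_of_nonneg zero_le_one fun m hm => ?_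
  have hcoeff : ‖algebraMap ℚ ℚ_[p] (c.coeff m)‖ ≤ 1 :=
    Padic.norm_rat_le_one (hc _ (coeff_mem_coeffs m (mem_support_iff.1 hm)))
  have hmonomial : ∏ i ∈ m.support, ‖(y i : ℚ_[p]) ^ m i‖ ≤ 1 :=
    Finset.prod_le_one (fun _ _ => norm_nonneg _) fun i _ => by
      rw [norm_pow]
      exact pow_le_one₀ (norm_nonneg _) (y i).norm_le_one
  rw [norm_mul, norm_prod]
  exact mul_le_one₀ hcoeff (by positivity) hmonomial

open Polynomial in
theorem isIntegral_padicInt_of_monic_of_norm_coeff_le_one {p : ℕ} [Fact p.Prime] {L : Type*}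
    [CommRing L] [Algebra ℚ_[p] L] [Algebra ℤ_[p] L] [IsScalarTower ℤ_[p] ℚ_[p] L]
    {q : ℚ_[p][X]} (hq : q.Monic) (hcoeff : ∀ j, ‖q.coeff j‖ ≤ 1) {x : L}
    (hx : aeval x q = 0) : IsIntegral ℤ_[p] x := by
  have hlift : q ∈ lifts (algebraMap ℤ_[p] ℚ_[p]) := by
    rw [lifts_iff_coeff_lifts]
    exact fun j => ⟨⟨q.coeff j, hcoeff j⟩, rfl⟩
  obtain ⟨Q, hQ, -, hQmonic⟩ := lifts_and_degree_eq_and_monic hlift hq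
  refine ⟨Q, hQmonic, ?_⟩
  rw [← aeval_def, ← aeval_map_algebraMap ℚ_[p], hQ, hx]

open Polynomial in
theorem exists_injective_isIntegral_padicInt {A : Type*} [CommRing A] [IsDomain A] [Algebra ℚ A]
    [Algebra.FiniteType ℚ A] {G : Set A} (hG : G.Finite) :
    ∃ (p : ℕ) (_ : Fact p.Prime) (φ : A →+* AlgebraicClosure ℚ_[p]),
      Function.Injective φ ∧ ∀ a ∈ G, IsIntegral ℤ_[p] (φ a) := by
  obtain ⟨s, g, hginj, hgint⟩ := exists_integral_inj_algHom_of_fg ℚ A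
  choose q hqmonic hqroot using fun a : A => hgint a
  have hdenoms : (⋃ a ∈ G, ⋃ c ∈ (q a).coeffs, (c.coeffs : Set ℚ)).Finite :=
    hG.biUnion fun a _ => (q a).coeffs.finite_toSet.biUnion fun c _ => c.coeffs.finite_toSet
  obtain ⟨p, hp, hden⟩ := exists_prime_forall_not_dvd_den hdenoms
  have : Fact p.Prime := ⟨hp⟩
  obtain ⟨y, hy⟩ := exists_algebraicIndependent_padicInt p (Fin s)
  let h : MvPolynomial (Fin s) ℚ →+* ℚ_[p] :=
    (MvPolynomial.aeval fun i => (y i : ℚ_[p])).toRingHom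
  have hinj : Function.Injective h := algebraicIndependent_iff_injective_aeval.1 hy
  obtain ⟨φ, hφinj, hφ⟩ := exists_injective_extension_of_isIntegral hgint hginj
    (h := (algebraMap ℚ_[p] (AlgebraicClosure ℚ_[p])).comp h)
    ((algebraMap ℚ_[p] _).injective.comp hinj)
  refine ⟨p, this, φ, hφinj, fun a ha => ?_⟩
  refine isIntegral_padicInt_of_monic_of_norm_coeff_le_one ((hqmonic a).map h) (fun j => ?_) ?_
  · rw [coeff_map]
    refine norm_aeval_le_one_of_forall_not_dvd_den y fun x hx => hden x ?_
    have hj : (q a).coeff j ≠ 0 := fun hj => by simp [hj] at hx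
    simp only [Set.mem_iUnion]
    exact ⟨a, ha, _, coeff_mem_coeffs hj, hx⟩
  · rw [aeval_def, eval₂_map, ← hφ, ← hom_eval₂]
    exact (congrArg φ (hqroot a)).trans (map_zero φ)

theorem map_mem_of_adjoin_int_eq_top {R L : Type*} [CommRing R] [CommRing L] (φ : R →+* L)
    {G : Set R} (hG : Algebra.adjoin ℤ G = ⊤) {S : Subring L} (hS : ∀ a ∈ G, φ a ∈ S) (x : R) :
    φ x ∈ S := by
  have hle : Algebra.adjoin ℤ G ≤ subalgebraOfSubring (S.comap φ) := Algebra.adjoin_le hS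
  exact hle (hG ▸ Algebra.mem_top)

theorem exists_injective_isIntegral_padicInt_of_adjoin_int {R : Type*} [CommRing R] [IsDomain R]
    [CharZero R] {G : Set R} (hGfin : G.Finite) (hG : Algebra.adjoin ℤ G = ⊤) :
    ∃ (p : ℕ) (_ : Fact p.Prime) (φ : R →+* AlgebraicClosure ℚ_[p]),
      Function.Injective φ ∧ ∀ a ∈ G, IsIntegral ℤ_[p] (φ a) := by
  let K := FractionRing R
  have : CharZero K := charZero_of_injective_algebraMap (IsFractionRing.injective R K)
  let A : Subalgebra ℚ K := Algebra.adjoin ℚ (algebraMap R K '' G)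
  have : Algebra.FiniteType ℚ A :=
    (Subalgebra.fg_iff_finiteType A).1 (Subalgebra.fg_def.2 ⟨_, hGfin.image _, rfl⟩)
  let j : R →+* A := (algebraMap R K).codRestrict A <|
    map_mem_of_adjoin_int_eq_top (S := A.toSubring) (algebraMap R K) hG fun a ha =>
      Algebra.subset_adjoin (Set.mem_image_of_mem _ ha)
  have hj : Function.Injective j := fun x y hxy =>
    IsFractionRing.injective R K (congrArg Subtype.val hxy)
  obtain ⟨p, hp, φ, hφinj, hφint⟩ := exists_injective_isIntegral_padicInt (hGfin.image j)
  exact ⟨p, hp, φ.comp j, hφinj.comp hj, fun a ha => hφint _ (Set.mem_image_of_mem j ha)⟩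

theorem exists_injective_finite_free_padicInt (R : Type*) [CommRing R] [IsDomain R] [CharZero R]
    [Algebra.FiniteType ℤ R] :
    ∃ (p : ℕ) (_ : Fact p.Prime) (S : Type) (_ : CommRing S) (_ : Algebra ℤ_[p] S),
      Module.Finite ℤ_[p] S ∧ Module.Free ℤ_[p] S ∧ ∃ φ : R →+* S, Function.Injective φ := by
  obtain ⟨G, hG⟩ := Algebra.FiniteType.out (R := ℤ) (A := R)
  obtain ⟨p, hp, φ, hφ, hint⟩ :=
    exists_injective_isIntegral_padicInt_of_adjoin_int G.finite_toSet hG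
  have : Module.IsTorsionFree ℤ_[p] (AlgebraicClosure ℚ_[p]) :=
    .trans_faithfulSMul ℤ_[p] ℚ_[p] _
  let S : Subalgebra ℤ_[p] (AlgebraicClosure ℚ_[p]) := Algebra.adjoin ℤ_[p] (φ '' G)
  have hfinite : Module.Finite ℤ_[p] S := Module.Finite.iff_fg.2 <|
    fg_adjoin_of_finite (G.finite_toSet.image φ) (Set.forall_mem_image.2 hint)
  have hmem : ∀ x, φ x ∈ S := map_mem_of_adjoin_int_eq_top (S := S.toSubring) φ hG fun a ha =>
    Algebra.subset_adjoin (Set.mem_image_of_mem φ ha)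
  exact ⟨p, hp, S, inferInstance, inferInstance, hfinite,
    Module.free_of_finite_type_torsion_free', φ.codRestrict S hmem,
    fun x y hxy => hφ (congrArg Subtype.val hxy)⟩

end Embedding

section Matrix

open Matrix

variable {κ ι o : Type*} [Fintype ι] [DecidableEq ι]

theorem map_mul_pow_mul_eq_zero_iff {R S : Type*} [CommRing R] [CommRing S] {φ : R →+* S}
    (hφ : Function.Injective φ) (P : Matrix κ ι R) (A : Matrix ι ι R) (Q : Matrix ι o R) (n : ℕ) :
    P.map φ * A.map φ ^ n * Q.map φ = 0 ↔ P * A ^ n * Q = 0 := by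
  rw [← Matrix.map_pow, ← Matrix.map_mul, ← Matrix.map_mul,
    ← Matrix.map_zero φ (map_zero φ), (Matrix.map_injective hφ).eq_iff]

theorem exists_progression_mul_pow_mul_eq_zero_of_finiteType [Finite κ] [Finite o] {R : Type*}
    [CommRing R] [IsDomain R] [CharZero R] [Algebra.FiniteType ℤ R] (P : Matrix κ ι R)
    (A : (Matrix ι ι R)ˣ) (Q : Matrix ι o R)
    (hzeros : {n : ℕ | P * (A : Matrix ι ι R) ^ n * Q = 0}.Infinite) :
    ∃ N r : ℕ, 1 ≤ N ∧ ∀ n, P * (A : Matrix ι ι R) ^ (N * n + r) * Q = 0 := by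
  obtain ⟨p, _, S, _, _, _, _, φ, hφ⟩ := exists_injective_finite_free_padicInt R
  let f : Matrix ι ι S →ₗ[ℤ_[p]] Matrix κ o S :=
    mulRightLinearMap κ ℤ_[p] (Q.map φ) ∘ₗ mulLeftLinearMap ι ℤ_[p] (P.map φ)
  let A' : (Matrix ι ι S)ˣ := Units.map (φ.mapMatrix : Matrix ι ι R →+* Matrix ι ι S) A
  have hf : ∀ n, f ((A' : Matrix ι ι S) ^ n) = 0 ↔ P * (A : Matrix ι ι R) ^ n * Q = 0 :=
    map_mul_pow_mul_eq_zero_iff hφ P A Q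
  simp only [← hf] at hzeros ⊢
  exact exists_progression_map_units_pow_eq_zero A' f hzeros

theorem exists_units_map_eq {M N : Type*} [Monoid M] [Monoid N] {f : M →* N}
    (hf : Function.Injective f) {u : Nˣ} {a b : M} (ha : f a = u) (hb : f b = (u⁻¹ : Nˣ)) :
    ∃ v : Mˣ, Units.map f v = u :=
  ⟨⟨a, b, hf (by simp [ha, hb]), hf (by simp [ha, hb])⟩, Units.ext ha⟩

/-- The set of entries of a matrix, used to generate a finitely generated ring of definition. -/
def matrixEntries {m n α : Type*} (M : Matrix m n α) : Set α :=
  Set.image2 M Set.univ Set.univ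

theorem finite_matrixEntries {m n α : Type*} [Finite m] [Finite n] (M : Matrix m n α) :
    (matrixEntries M).Finite :=
  Set.Finite.image2 M Set.finite_univ Set.finite_univ

theorem exists_subring_finiteType_of_finite {K : Type*} [CommRing K] {G : Set K} (hG : G.Finite) :
    ∃ R : Subring K, G ⊆ R ∧ Algebra.FiniteType ℤ R :=
  ⟨(Algebra.adjoin ℤ G).toSubring, Algebra.subset_adjoin,
    (Subalgebra.fg_iff_finiteType (Algebra.adjoin ℤ G)).1 (Subalgebra.fg_def.2 ⟨G, hG, rfl⟩)⟩

theorem exists_map_subtype_eq {m n K : Type*} [Ring K] {S : Subring K} {M : Matrix m n K}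
    (h : matrixEntries M ⊆ S) : ∃ M' : Matrix m n S, M'.map S.subtype = M :=
  ⟨of fun i j => ⟨M i j, h (Set.mem_image2_of_mem trivial trivial)⟩, rfl⟩

theorem exists_progression_mul_pow_mul_eq_zero [Finite κ] [Finite o] {K : Type*} [CommRing K]
    [IsDomain K] [CharZero K] (P : Matrix κ ι K) (A : (Matrix ι ι K)ˣ) (Q : Matrix ι o K)
    (hzeros : {n : ℕ | P * (A : Matrix ι ι K) ^ n * Q = 0}.Infinite) :
    ∃ N r : ℕ, 1 ≤ N ∧ ∀ n, P * (A : Matrix ι ι K) ^ (N * n + r) * Q = 0 := by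
  obtain ⟨R, hR, _⟩ := exists_subring_finiteType_of_finite <|
    (((finite_matrixEntries P).union (finite_matrixEntries A.1)).union
      (finite_matrixEntries A⁻¹.1)).union (finite_matrixEntries Q)
  simp only [Set.union_subset_iff] at hR
  obtain ⟨⟨⟨hP, hA⟩, hAinv⟩, hQ⟩ := hR
  have hθ : Function.Injective R.subtype := Subtype.val_injective
  obtain ⟨P', rfl⟩ := exists_map_subtype_eq hP
  obtain ⟨Q', rfl⟩ := exists_map_subtype_eq hQ
  obtain ⟨B, hB⟩ := exists_map_subtype_eq hA
  obtain ⟨C, hC⟩ := exists_map_subtype_eq hAinv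
  obtain ⟨A', rfl⟩ := exists_units_map_eq
    (f := (R.subtype.mapMatrix (m := ι)).toMonoidHom) (Matrix.map_injective hθ) hB hC
  have hdescend := map_mul_pow_mul_eq_zero_iff hθ P' (A' : Matrix ι ι R) Q'
  have hzeros' : {n : ℕ | P' * (A' : Matrix ι ι R) ^ n * Q' = 0}.Infinite :=
    hzeros.mono fun n hn => (hdescend n).1 hn
  obtain ⟨N, r, hN, h⟩ := exists_progression_mul_pow_mul_eq_zero_of_finiteType P' A' Q' hzeros'
  exact ⟨N, r, hN, fun n => (hdescend _).2 (h n)⟩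

end Matrix

section Linear

theorem exists_isUnit_restrict_range_pow {R M : Type*} [Ring R] [AddCommGroup M] [Module R M]
    [IsNoetherian R M] [IsArtinian R M] (f : Module.End R M) :
    ∃ (k : ℕ) (hf : ∀ x ∈ LinearMap.range (f ^ k), f x ∈ LinearMap.range (f ^ k)),
      IsUnit (f.restrict hf : Module.End R (LinearMap.range (f ^ k))) := by
  obtain ⟨k, hk⟩ := IsArtinian.monotone_stabilizes f.iterateRange
  have hmap : (LinearMap.range (f ^ k)).map f = LinearMap.range (f ^ k) := by
    rw [← LinearMap.range_comp, ← Module.End.mul_eq_comp, ← pow_succ']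
    exact (hk (k + 1) k.le_succ).symm
  have hf : ∀ x ∈ LinearMap.range (f ^ k), f x ∈ LinearMap.range (f ^ k) := fun x hx =>
    hmap ▸ Submodule.mem_map_of_mem hx
  have hsurj : Function.Surjective (f.restrict hf) := fun y => by
    obtain ⟨x, hx, hxy⟩ := hmap.ge y.2
    exact ⟨⟨x, hx⟩, Subtype.ext hxy⟩
  exact ⟨k, hf, (Module.End.isUnit_iff _).2
    ⟨IsNoetherian.injective_of_surjective_endomorphism _ hsurj, hsurj⟩⟩

variable {K V W : Type*} [Field K] [CharZero K] [AddCommGroup V] [Module K V]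
  [FiniteDimensional K V] [AddCommGroup W] [Module K W]

theorem exists_progression_map_units_pow_apply_eq_zero (u : (Module.End K V)ˣ) (g : V →ₗ[K] W)
    (v : V) (hzeros : {n : ℕ | g (((u : Module.End K V) ^ n) v) = 0}.Infinite) :
    ∃ N r : ℕ, 1 ≤ N ∧ ∀ n, g (((u : Module.End K V) ^ (N * n + r)) v) = 0 := by
  classical
  let b := Module.finBasis K V
  let c := Module.finBasis K (LinearMap.range g)
  let e := Module.Basis.singleton Unit K
  let A : (Matrix _ _ K)ˣ := Units.mapEquiv (LinearMap.toMatrixAlgEquiv b).toMulEquiv u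
  have hmatrix : ∀ n : ℕ, LinearMap.toMatrix b c g.rangeRestrict * A.1 ^ n *
      LinearMap.toMatrix e b (LinearMap.toSpanSingleton K V v) = 0 ↔
      g (((u : Module.End K V) ^ n) v) = 0 := by
    intro n
    have hA : A.1 = LinearMap.toMatrix b b (u : Module.End K V) := rfl
    rw [hA, LinearMap.toMatrix_pow, ← LinearMap.toMatrix_comp, ← LinearMap.toMatrix_comp,
      LinearEquiv.map_eq_zero_iff, LinearMap.ext_ring_iff]
    simp [Subtype.ext_iff]
  simp only [← hmatrix] at hzeros ⊢
  exact exists_progression_mul_pow_mul_eq_zero _ A _ hzeros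

theorem infinite_setOf_add_mem {Z : Set ℕ} (hZ : Z.Infinite) (k : ℕ) :
    {n | n + k ∈ Z}.Infinite :=
  Nat.frequently_atTop_iff_infinite.1 <| Filter.frequently_map.1 <|
    (Filter.map_add_atTop_eq_nat k).symm ▸ Nat.frequently_atTop_iff_infinite.2 hZ

theorem stmt_0_general (f : V →ₗ[K] V) (g : V →ₗ[K] W) (v : V)
    (hzeros : {n : ℕ | g ((f ^ n) v) = 0}.Infinite) :
    ∃ p r : ℕ, 1 ≤ p ∧ ∀ n : ℕ, g ((f ^ (p * n + r)) v) = 0 := by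
  obtain ⟨k, hf, u, hu⟩ := exists_isUnit_restrict_range_pow f
  let v' : LinearMap.range (f ^ k) := ⟨(f ^ k) v, LinearMap.mem_range_self _ v⟩
  let g' := g ∘ₗ (LinearMap.range (f ^ k)).subtype
  have hshift : ∀ n, g' (((u : Module.End K _) ^ n) v') = g ((f ^ (n + k)) v) := by
    intro n
    rw [hu, Module.End.pow_restrict, pow_add]
    rfl
  obtain ⟨p, r, hp, h⟩ := exists_progression_map_units_pow_apply_eq_zero u g' v' <|
    (infinite_setOf_add_mem hzeros k).mono fun n hn => (hshift n).trans hn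
  exact ⟨p, r + k, hp, fun n => by rw [← add_assoc, ← hshift, h]⟩

end Linear

/-- If the set `Z = {n | P U^n ψ₀ = 0}` is infinite, then it contains a full
arithmetic progression `{p n + r : n ∈ ℕ}` with `p ≥ 1`. Here `U` is a unitary operator
(a linear map preserving the inner product) on a finite-dimensional complex inner product
space, and `P` is an orthogonal projection (idempotent and self-adjoint). -/
theorem stmt_0 {H : Type*} [NormedAddCommGroup H] [InnerProductSpace ℂ H]
    [FiniteDimensional ℂ H]
    (U : H →ₗ[ℂ] H) (hU : ∀ x y : H, ⟪U x, U y⟫_ℂ = ⟪x, y⟫_ℂ)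
    (P : H →ₗ[ℂ] H) (hPidem : P ∘ₗ P = P)
    (hPsa : ∀ x y : H, ⟪P x, y⟫_ℂ = ⟪x, P y⟫_ℂ)
    (ψ₀ : H)
    (hZ : {n : ℕ | P ((U ^ n) ψ₀) = 0}.Infinite) :
    ∃ p r : ℕ, 1 ≤ p ∧ ∀ n : ℕ, P ((U ^ (p * n + r)) ψ₀) = 0 :=
  stmt_0_general U P ψ₀ hZ
end

section
/- (Skolem–Mahler–Lech) Let F be a field of characteristic 0, let d ≥ 1, let c₀, …, c_{d-1} ∈ F, and let a : ℕ → F be a sequence satisfying the linear recurrence a(n+d) = c_{d-1} a(n+d-1) + c_{d-2} a(n+d-2) + ⋯ + c₀ a(n) for all n ∈ ℕ. Then the zero set {n ∈ ℕ | a(n) = 0} is semilinear, i.e., it is the union of a finite set and finitely many arithmetic progressions of the form {a k + b : k ∈ ℕ} with a ≥ 1. -/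
/-- A subset `Z` of `ℕ` is *semilinear* if it is the union of a finite set and finitely many
arithmetic progressions `{a k + b : k ∈ ℕ}` with `a ≥ 1`. -/
def Semilinear (Z : Set ℕ) : Prop :=
  ∃ (F : Finset ℕ) (s : Finset (ℕ × ℕ)),
    (∀ q ∈ s, 1 ≤ q.1) ∧
    Z = ↑F ∪ ⋃ q ∈ s, {n : ℕ | ∃ k : ℕ, n = q.1 * k + q.2}

/-!
Discarding the coefficients `c₀`, `c₁`, … as long as they vanish, we may assume `c₀ ≠ 0`. Then `c₀`
is invertible in a finitely generated domain `A` of characteristic `0` containing all data, and `A`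
embeds into a Noetherian domain `R` in which some prime number `p` is not a unit and for which
`J = A ∩ p²R` has finite index in `A`. Modulo `J` all solutions are periodic with a common period
`N`, so the `j`-th iterated difference with step `N` sends solutions into `J ^ j ⊆ p ^ (2j) R`.
In Newton's formula `u (r + k N) = ∑ j, (k choose j) Δ^j u r` half of these powers of `p`
compensates the denominators `j!`; the other half makes `k ↦ u (r + k N)` a power series in `k`
whose coefficients tend to zero `p`-adically. As in Strassmann's theorem, if it has infinitely many
zeros it vanishes. Hence the zero set contains every residue class modulo `N` that it meets
infinitely often.
-/

section

open Polynomial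
open scoped fwdDiff Nat

universe u

/-! ### Semilinear sets -/

theorem semilinear_of_modulus {Z : Set ℕ} {N : ℕ} (hN : 1 ≤ N)
    (h : ∀ r, {k | N * k + r ∈ Z}.Infinite → ∀ k, N * k + r ∈ Z) : Semilinear Z := by
  classical
  set T := (Finset.range N).filter fun r ↦ {k | N * k + r ∈ Z}.Infinite with hT
  have hfin : {n ∈ Z | n % N ∉ T}.Finite := by
    have hsub : {n ∈ Z | n % N ∉ T} ⊆ ⋃ r ∈ (Finset.range N).filter (· ∉ T),
        (fun k ↦ N * k + r) '' {k | N * k + r ∈ Z} := by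
      rintro n ⟨hn, hnT⟩
      simp only [Set.mem_iUnion]
      refine ⟨n % N, by simpa using ⟨Nat.mod_lt _ hN, hnT⟩, n / N, ?_, Nat.div_add_mod n N⟩
      rwa [Set.mem_ofPred_eq, Nat.div_add_mod]
    refine Set.Finite.subset (Set.Finite.biUnion (Finset.finite_toSet _) fun r hr ↦ ?_) hsub
    refine Set.Finite.image _ ?_
    simp only [hT, Finset.coe_filter, Finset.mem_filter, Finset.mem_range, Set.mem_ofPred_eq,
      not_and, Set.not_infinite] at hr
    exact hr.2 hr.1
  refine ⟨hfin.toFinset, T.image fun r ↦ (N, r), ?_, ?_⟩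
  · intro q hq
    obtain ⟨r, -, rfl⟩ := Finset.mem_image.mp hq
    exact hN
  · ext n
    simp only [Set.Finite.coe_toFinset, Set.mem_union, Set.mem_ofPred_eq, Set.mem_iUnion,
      Finset.mem_image, exists_prop]
    constructor
    · intro hn
      by_cases hnT : n % N ∈ T
      · exact Or.inr ⟨(N, n % N), ⟨_, hnT, rfl⟩, n / N, (Nat.div_add_mod n N).symm⟩
      · exact Or.inl ⟨hn, hnT⟩
    · rintro (⟨hn, -⟩ | ⟨_, ⟨r, hr, rfl⟩, k, rfl⟩)
      · exact hn
      · exact h r (Finset.mem_filter.mp hr).2 k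

theorem Semilinear.of_preimage_succ {Z : Set ℕ} (h : Semilinear {n | n + 1 ∈ Z}) :
    Semilinear Z := by
  classical
  obtain ⟨A, s, hs, hZ⟩ := h
  refine ⟨A.image (· + 1) ∪ if 0 ∈ Z then {0} else ∅, s.image fun q ↦ (q.1, q.2 + 1), ?_, ?_⟩
  · intro q hq
    obtain ⟨r, hr, rfl⟩ := Finset.mem_image.mp hq
    exact hs r hr
  · ext n
    rcases n with _ | n
    · by_cases h0 : 0 ∈ Z <;> simp [h0]
    · have hn := Set.ext_iff.mp hZ n
      simp only [Set.mem_ofPred_eq, Set.mem_union, Set.mem_iUnion, exists_prop] at hn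
      rw [hn]
      split_ifs <;> simp [← add_assoc]

/-! ### Strassmann's theorem -/

theorem eval_mem_of_forall_eval_eq_zero {R : Type*} [CommRing R] [IsDomain R] {I : Ideal R}
    {S : Finset R} {P : R[X]} (hroot : ∀ s ∈ S, P.eval s = 0)
    (hcoeff : ∀ i, S.card ≤ i → P.coeff i ∈ I) (t : R) : P.eval t ∈ I := by
  classical
  induction S using Finset.induction_on generalizing P with
  | empty =>
    rw [eval_eq_sum_range]
    exact I.sum_mem fun i _ ↦ I.mul_mem_right _ (hcoeff i i.zero_le)
  | insert s S hs ih =>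
    have hP : (X - C s) * (P /ₘ (X - C s)) = P :=
      mul_divByMonic_eq_iff_isRoot.mpr (hroot s (Finset.mem_insert_self s S))
    have hQ : (P /ₘ (X - C s)).eval t ∈ I := by
      refine ih (fun u hu ↦ ?_) fun i hi ↦ ?_
      · have h := hroot u (Finset.mem_insert_of_mem hu)
        rw [← hP, eval_mul, eval_sub, eval_X, eval_C] at h
        exact (mul_eq_zero.mp h).resolve_left (sub_ne_zero.mpr (ne_of_mem_of_not_mem hu hs))
      · rw [coeff_divByMonic_X_sub_C]
        refine I.sum_mem fun j hj ↦ I.mul_mem_left _ (hcoeff j ?_)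
        rw [Finset.card_insert_of_notMem hs]
        exact (Nat.succ_le_succ hi).trans (Finset.mem_Icc.mp hj).1
    rw [← hP, eval_mul]
    exact I.mul_mem_left _ hQ

theorem factorial_dvd_pow_mul_ordCompl_factorial {p : ℕ} (hp : p.Prime) {j n : ℕ} (hjn : j ≤ n) :
    j ! ∣ p ^ j * ordCompl[p] n ! := by
  rw [← Nat.ordProj_mul_ordCompl_eq_self j ! p]
  have hv : (j !).factorization p ≤ j :=
    (Nat.factorization_factorial_le_div_pred hp j).trans (Nat.div_le_self _ _)
  exact mul_dvd_mul (pow_dvd_pow p hv)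
    (Nat.ordCompl_dvd_ordCompl_of_dvd (Nat.factorial_dvd_factorial hjn) p)

section

variable {M R : Type*} [AddCommMonoid M] [CommRing R] [IsDomain R] {p : ℕ} {f : M → R} {h x : M}

theorem exists_eval_eq_mul_of_pow_dvd_fwdDiff (hp : p.Prime)
    (hdvd : ∀ j, (p : R) ^ (2 * j) ∣ Δ_[h] ^[j] f x) (n : ℕ) :
    ∃ (D : ℕ) (P : R[X]), p.Coprime D ∧ (∀ k ≤ n, P.eval (k : R) = D * f (x + k • h)) ∧
      ∀ i, (p : R) ^ i ∣ P.coeff i := by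
  choose γ hγ using hdvd
  choose! u hu using fun j (hj : j ≤ n) ↦ factorial_dvd_pow_mul_ordCompl_factorial hp hj
  refine ⟨ordCompl[p] n !, ∑ j ∈ Finset.range (n + 1), C (u j * p ^ j * γ j) * descPochhammer R j,
    Nat.coprime_ordCompl hp n.factorial_ne_zero, fun k hk ↦ ?_, fun i ↦ ?_⟩
  · have hterm (j) (hj : j ≤ n) : (u j * p ^ j * γ j) * (k.descFactorial j : R) =
        ↑(ordCompl[p] n !) * (k.choose j • Δ_[h] ^[j] f x) := by
      have huR : (p : R) ^ j * ↑(ordCompl[p] n !) = j ! * u j :=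
        mod_cast congrArg Nat.cast (hu j hj)
      rw [hγ, Nat.descFactorial_eq_factorial_mul_choose, nsmul_eq_mul]
      push_cast
      linear_combination -(p ^ j * γ j * k.choose j) * huR
    rw [eval_finsetSum, shift_eq_sum_fwdDiff_iter h f, Finset.mul_sum]
    simp only [eval_mul, eval_C, descPochhammer_eval_eq_descFactorial]
    refine (Finset.sum_subset (Finset.range_mono (Nat.succ_le_succ hk)) fun j _ hj ↦ ?_).symm.trans
      (Finset.sum_congr rfl fun j hj ↦ hterm j ?_)
    · rw [Nat.descFactorial_of_lt (by simpa using hj), Nat.cast_zero, mul_zero]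
    · exact (Finset.mem_range_succ_iff.mp hj).trans hk
  · rw [finsetSum_coeff]
    refine Finset.dvd_sum fun j _ ↦ ?_
    rw [coeff_C_mul]
    rcases lt_or_ge j i with hji | hij
    · rw [coeff_eq_zero_of_natDegree_lt ((descPochhammer_natDegree R j).trans_lt hji), mul_zero]
      exact dvd_zero _
    · exact (((pow_dvd_pow _ hij).mul_left _).mul_right _).mul_right _

theorem pow_dvd_of_infinite_zeros_of_pow_dvd_fwdDiff [CharZero R] (hp : p.Prime)
    (hdvd : ∀ j, (p : R) ^ (2 * j) ∣ Δ_[h] ^[j] f x)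
    (hinf : {k : ℕ | f (x + k • h) = 0}.Infinite) (k e : ℕ) : (p : R) ^ e ∣ f (x + k • h) := by
  classical
  obtain ⟨S, hS, hcard⟩ := hinf.exists_subset_card_eq e
  obtain ⟨D, P, hD, heval, hcoeff⟩ :=
    exists_eval_eq_mul_of_pow_dvd_fwdDiff hp hdvd (max k (S.sup id))
  have hroot : ∀ s ∈ S.image ((↑) : ℕ → R), P.eval s = 0 := by
    simp only [Finset.mem_image, forall_exists_index, and_imp, forall_apply_eq_imp_iff₂]
    intro s hs
    rw [heval s ((Finset.le_sup (f := id) hs).trans (le_max_right _ _)), hS hs, mul_zero]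
  have hmem : P.eval (k : R) ∈ Ideal.span {(p : R) ^ e} := by
    refine eval_mem_of_forall_eval_eq_zero hroot (fun i hi ↦ Ideal.mem_span_singleton.mpr ?_) _
    rw [Finset.card_image_of_injective _ Nat.cast_injective, hcard] at hi
    exact (pow_dvd_pow _ hi).trans (hcoeff i)
  rw [heval k (le_max_left _ _), Ideal.mem_span_singleton] at hmem
  have hcop : IsCoprime ((p : R) ^ e) D := .pow_left hD.cast
  exact hcop.dvd_of_dvd_mul_left hmem

theorem eq_zero_of_infinite_zeros_of_pow_dvd_fwdDiff [CharZero R] [WfDvdMonoid R]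
    (hp : p.Prime) (hpR : ¬IsUnit (p : R)) (hdvd : ∀ j, (p : R) ^ (2 * j) ∣ Δ_[h] ^[j] f x)
    (hinf : {k : ℕ | f (x + k • h) = 0}.Infinite) (k : ℕ) : f (x + k • h) = 0 := by
  by_contra hne
  obtain ⟨e, he⟩ := FiniteMultiplicity.of_not_isUnit hpR hne
  exact he (pow_dvd_of_infinite_zeros_of_pow_dvd_fwdDiff hp hdvd hinf k (e + 1))

end

/-! ### Finite residue rings of finitely generated domains -/

theorem exists_valuationSubring_valuation_lt_one {A : Type*} (K : Type*) [CommRing A] [Field K]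
    [Algebra A K] [FaithfulSMul A K] {I : Ideal A} (hI : I ≠ ⊤) :
    ∃ V : ValuationSubring K, (∀ a, V.valuation (algebraMap A K a) ≤ 1) ∧
      ∀ a ∈ I, V.valuation (algebraMap A K a) < 1 := by
  let e : A ≃+* (algebraMap A K).range := RingEquiv.ofBijective (algebraMap A K).rangeRestrict
    ⟨fun a b h ↦ FaithfulSMul.algebraMap_injective A K (congrArg Subtype.val h),
      (algebraMap A K).rangeRestrict_surjective⟩
  obtain ⟨V, hle, hV⟩ :=
    Ideal.image_subset_nonunits_valuationSubring _ (Ideal.comap_ne_top e.symm hI)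
  refine ⟨V, fun a ↦ V.valuation_le_one ⟨_, hle ⟨a, rfl⟩⟩,
    fun a ha ↦ V.mem_nonunits_iff.mp (hV ⟨e a, ?_, rfl⟩)⟩
  rwa [SetLike.mem_coe, Ideal.mem_comap, RingEquiv.symm_apply_apply]

theorem exists_subalgebra_map_eq_span_singleton {A : Type*} (K : Type*) [CommRing A] [Field K]
    [Algebra A K] [FaithfulSMul A K] {I : Ideal A} (hI : I ≠ ⊤) (hfg : I.FG) :
    ∃ (B : Subalgebra A K) (x : B), B.FG ∧ ¬IsUnit x ∧
      I.map (algebraMap A B) = Ideal.span {x} := by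
  classical
  obtain ⟨s, rfl⟩ := hfg
  obtain ⟨V, hAV, hsV⟩ := exists_valuationSubring_valuation_lt_one K hI
  obtain ⟨x, hx, hmax⟩ := (insert 0 s).exists_max_image (fun a ↦ V.valuation (algebraMap A K a))
    ⟨0, Finset.mem_insert_self 0 s⟩
  replace hmax (y) (hy : y ∈ s) := hmax y (Finset.mem_insert_of_mem hy)
  have hxI : x ∈ Ideal.span (s : Set A) := by
    rcases Finset.mem_insert.mp hx with rfl | hx
    exacts [zero_mem _, Ideal.subset_span hx]
  -- `B` is generated by quotients of valuation at most `1`, which keeps `x` from becoming a unit.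
  let G : Finset K := s.image fun y ↦ algebraMap A K y / algebraMap A K x
  have hGV : ∀ z ∈ Algebra.adjoin A (G : Set K), V.valuation z ≤ 1 := fun z hz ↦ by
    induction hz using Algebra.adjoin_induction with
    | mem z hz =>
      obtain ⟨y, hy, rfl⟩ := Finset.mem_image.mp hz
      rw [map_div₀]
      exact div_le_one_of_le₀ (hmax y hy) zero_le
    | algebraMap a => exact hAV a
    | add z w _ _ hz hw => exact V.valuation.map_add_le hz hw
    | mul z w _ _ hz hw => rw [map_mul]; exact mul_le_one' hz hw
  refine ⟨Algebra.adjoin A G, algebraMap A _ x, ⟨G, rfl⟩, fun hu ↦ ?_, le_antisymm ?_ ?_⟩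
  · obtain ⟨z, hz⟩ := hu.exists_right_inv
    have hxz : algebraMap A K x * z = 1 := congrArg Subtype.val hz
    refine (mul_lt_one_of_lt_of_le (hsV x hxI) (hGV z z.2)).ne ?_
    rw [← map_mul, hxz, map_one]
  · rw [Ideal.map_span, Ideal.span_le]
    rintro _ ⟨y, hy, rfl⟩
    refine Ideal.mem_span_singleton'.mpr ⟨⟨_, Algebra.subset_adjoin (Finset.mem_image_of_mem _ hy)⟩,
      Subtype.ext (div_mul_cancel_of_imp fun h0 ↦ ?_)⟩
    simpa [h0] using hmax y hy
  · rw [Ideal.span_singleton_le_iff_mem]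
    exact Ideal.mem_map_of_mem _ hxI

theorem exists_injective_ringHom_dvd_pow {B : Type u} [CommRing B] [IsDomain B]
    [IsNoetherianRing B] {x y : B} (hx : ¬IsUnit x) (hy : y ≠ 0) (hxy : x ∣ y) :
    ∃ (R : Type u) (_ : CommRing R) (_ : IsDomain R) (_ : IsNoetherianRing R) (f : B →+* R),
      Function.Injective f ∧ ¬IsUnit (f x) ∧ ∃ e, f y ∣ f x ^ e := by
  obtain ⟨P, hP⟩ := Ideal.nonempty_minimalPrimes (mt Ideal.span_singleton_eq_top.mp hx)
  have hPprime := hP.isPrime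
  have hxP : x ∈ P := (Ideal.span_singleton_le_iff_mem P).mp hP.1.2
  have hy' : y ∈ nonZeroDivisors B := mem_nonZeroDivisors_of_ne_zero hy
  have hyP : Ideal.span {y} ≤ P :=
    (Ideal.span_singleton_le_iff_mem P).mpr (P.mem_of_dvd hxy hxP)
  -- By Krull's principal ideal theorem, a prime which is minimal over `x` is also minimal over `y`.
  have hheight : P.height ≤ (Ideal.span {y}).height :=
    (Ideal.height_le_one_of_isPrincipal_of_mem_minimalPrimes _ P hP).trans
      (Ideal.one_le_height_span_singleton_of_mem_nonZeroDivisors hy')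
  have hrad := IsLocalization.AtPrime.radical_map_of_mem_minimalPrimes
    (A := Localization.AtPrime P) P _ (Ideal.mem_minimalPrimes_of_height_le hyP hheight)
  obtain ⟨e, he⟩ := hrad.ge (Ideal.mem_map_of_mem _ hxP)
  rw [Ideal.map_span, Set.image_singleton, Ideal.mem_span_singleton] at he
  exact ⟨Localization.AtPrime P, inferInstance, inferInstance, inferInstance, algebraMap B _,
    IsLocalization.injective _ P.primeCompl_le_nonZeroDivisors,
    fun hu ↦ (IsLocalization.AtPrime.isUnit_to_map_iff _ P x).mp hu hxP, e, he⟩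

theorem exists_isNoetherianRing_pow_le_comap {A : Type u} [CommRing A] [IsDomain A]
    [IsNoetherianRing A] {I : Ideal A} (hI : I ≠ ⊤) {y : A} (hyI : y ∈ I) (hy : y ≠ 0) :
    ∃ (R : Type u) (_ : CommRing R) (_ : IsDomain R) (_ : IsNoetherianRing R) (f : A →+* R),
      Function.Injective f ∧ ¬IsUnit (f y) ∧ ∃ e, I ^ e ≤ (Ideal.span {f y}).comap f := by
  obtain ⟨B, x, hB, hx, hIx⟩ :=
    exists_subalgebra_map_eq_span_singleton (FractionRing A) hI (IsNoetherian.noetherian I)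
  have hAB : Function.Injective (algebraMap A B) := FaithfulSMul.algebraMap_injective A B
  have := B.fg_iff_finiteType.mp hB
  have := Algebra.FiniteType.isNoetherianRing A B
  have hxy : x ∣ algebraMap A B y :=
    Ideal.mem_span_singleton.mp (hIx ▸ Ideal.mem_map_of_mem _ hyI)
  obtain ⟨R, _, _, _, f, hf, hfx, e, he⟩ :=
    exists_injective_ringHom_dvd_pow hx ((map_ne_zero_iff _ hAB).mpr hy) hxy
  refine ⟨R, _, ‹_›, ‹_›, f.comp (algebraMap A B), hf.comp hAB,
    fun hu ↦ hfx (isUnit_of_dvd_unit (map_dvd f hxy) hu), e, ?_⟩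
  rwa [← Ideal.map_le_iff_le_comap, ← Ideal.map_map, Ideal.map_pow, hIx, Ideal.span_singleton_pow,
    Ideal.map_span, Set.image_singleton, Ideal.span_singleton_le_span_singleton, map_pow]

theorem isJacobsonRing_int : IsJacobsonRing ℤ := by
  refine isJacobsonRing_iff_prime_eq.mpr fun P hP ↦ ?_
  rcases eq_or_ne P ⊥ with rfl | hbot
  · refine le_bot_iff.mp fun n hn ↦ ?_
    rcases Int.isUnit_iff.mp (Ideal.mem_jacobson_bot.mp hn n) with h | h
    · simpa using h
    · nlinarith [mul_self_nonneg n]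
  · have := hP.isMaximal hbot
    exact Ideal.jacobson_eq_self_of_isMaximal

theorem finite_of_isField_of_finiteType_int {k : Type*} [CommRing k] (hk : IsField k)
    (hfg : Algebra.FiniteType ℤ k) : Finite k := by
  have := isJacobsonRing_int
  let := hk.toField
  have : Module.Finite ℤ k := finite_of_finite_type_of_isJacobsonRing ℤ k
  obtain ⟨p, _⟩ := CharP.exists k
  have hp : p ≠ 0 := by
    rintro rfl
    have := CharP.charP_to_charZero k
    exact Int.not_isField ((Algebra.IsIntegral.isField_iff_isField Int.cast_injective).mpr hk)
  refine Module.finite_of_fg_torsion k fun {z} ↦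
    ⟨⟨p, mem_nonZeroDivisors_of_ne_zero (Nat.cast_ne_zero.mpr hp)⟩, ?_⟩
  rw [Submonoid.mk_smul, natCast_zsmul, nsmul_eq_mul, CharP.cast_eq_zero, zero_mul]

theorem exists_prime_isNoetherianRing_finite_quotient_comap (A : Type u) [CommRing A] [IsDomain A]
    [CharZero A] [Algebra.FiniteType ℤ A] {k : ℕ} (hk : k ≠ 0) :
    ∃ (p : ℕ) (R : Type u) (_ : CommRing R) (_ : IsDomain R) (_ : IsNoetherianRing R) (f : A →+* R),
      p.Prime ∧ Function.Injective f ∧ ¬IsUnit (p : R) ∧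
        Finite (A ⧸ (Ideal.span {(p : R) ^ k}).comap f) := by
  have := Algebra.FiniteType.isNoetherianRing ℤ A
  obtain ⟨m, hm⟩ := Ideal.exists_maximal A
  have : Finite (A ⧸ m) :=
    finite_of_isField_of_finiteType_int
      ((Ideal.Quotient.maximal_ideal_iff_isField_quotient m).mp hm)
      (.of_surjective (Ideal.Quotient.mk m).toIntAlgHom Ideal.Quotient.mk_surjective)
  obtain ⟨p, _⟩ := CharP.exists (A ⧸ m)
  have hp : p.Prime := (CharP.char_is_prime_or_zero (A ⧸ m) p).resolve_right
    (CharP.char_ne_zero_of_finite (A ⧸ m) p)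
  have hpm : (p : A) ∈ m := by
    rw [← Ideal.Quotient.eq_zero_iff_mem, map_natCast, CharP.cast_eq_zero]
  obtain ⟨R, _, _, _, f, hf, hu, e, he⟩ := exists_isNoetherianRing_pow_le_comap hm.ne_top
    (Ideal.pow_mem_of_mem m hpm k (Nat.pos_of_ne_zero hk))
    (pow_ne_zero k (Nat.cast_ne_zero.mpr hp.ne_zero))
  rw [map_pow, map_natCast] at hu he
  have := Ideal.finite_quotient_pow (IsNoetherian.noetherian m) e
  exact ⟨p, R, _, ‹_›, ‹_›, f, hp, hf, fun h ↦ hu (h.pow k),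
    .of_surjective (α := A ⧸ m ^ e) _ (Ideal.Quotient.factor_surjective he)⟩

/-! ### Linear recurrences -/

theorem isSolution_comp_ringHom {R S : Type*} [CommSemiring R] [CommSemiring S]
    {E : LinearRecurrence R} {u : ℕ → R} (hu : E.IsSolution u) (f : R →+* S) :
    (⟨E.order, f ∘ E.coeffs⟩ : LinearRecurrence S).IsSolution (f ∘ u) := fun n ↦ by
  simp only [Function.comp_apply, hu n, map_sum, map_mul]

theorem isSolution_comp_add_right {R : Type*} [CommSemiring R] {E : LinearRecurrence R} {u : ℕ → R}
    (hu : E.IsSolution u) (k : ℕ) : E.IsSolution fun n ↦ u (n + k) := fun n ↦ by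
  simpa only [add_right_comm] using hu (n + k)

theorem isSolution_fwdDiff {R : Type*} [CommRing R] {E : LinearRecurrence R} {u : ℕ → R}
    (hu : E.IsSolution u) (k : ℕ) : E.IsSolution (Δ_[k] u) :=
  E.solSpace.sub_mem (x := fun n ↦ u (n + k)) (isSolution_comp_add_right hu k) hu

theorem eq_sum_smul_basis {R : Type*} [CommSemiring R] {E : LinearRecurrence R} {u : ℕ → R}
    (hu : E.IsSolution u) : u = ∑ i : Fin E.order, u i • (E.basis i : ℕ → R) := by
  simpa only [Submodule.coe_sum, Submodule.coe_smul, LinearRecurrence.repr_basis_apply]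
    using congrArg Subtype.val (E.basis.sum_repr ⟨u, hu⟩).symm

theorem eq_zero_of_forall_succ_eq_zero {R : Type*} [CommSemiring R] {E : LinearRecurrence R}
    [NeZero E.order] (h0 : IsUnit (E.coeffs 0)) {u : ℕ → R} (hu : E.IsSolution u)
    (h : ∀ n, u (n + 1) = 0) : u = 0 := by
  have hpos {n : ℕ} (hn : n ≠ 0) : u n = 0 := by
    obtain ⟨n, rfl⟩ := Nat.exists_eq_succ_of_ne_zero hn
    exact h n
  have hsum := hu 0
  rw [zero_add, hpos (NeZero.ne _), Finset.sum_eq_single 0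
    (fun i _ hi ↦ by rw [zero_add, hpos (Fin.val_ne_zero_iff.mpr hi), mul_zero]) (by simp)] at hsum
  funext n
  rcases eq_or_ne n 0 with rfl | hn
  · simpa using h0.mul_right_eq_zero.mp hsum.symm
  · exact hpos hn

theorem exists_pos_forall_isSolution_periodic {R : Type*} [CommRing R] [Finite R]
    (E : LinearRecurrence R) [NeZero E.order] (h0 : IsUnit (E.coeffs 0)) :
    ∃ N, 0 < N ∧ ∀ u, E.IsSolution u → Function.Periodic u N := by
  let σ : Module.End R E.solSpace := (LinearMap.funLeft R R Nat.succ).restrict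
    fun _ hu ↦ isSolution_comp_add_right hu 1
  have hσ : Function.Injective σ := by
    refine (injective_iff_map_eq_zero σ).mpr fun u hu ↦ Subtype.ext ?_
    exact eq_zero_of_forall_succ_eq_zero h0 u.2 fun n ↦ congrFun (congrArg Subtype.val hu) n
  have : Finite E.solSpace := .of_equiv _ E.toInit.symm.toEquiv
  let e : Equiv.Perm E.solSpace := .ofBijective σ (Finite.injective_iff_bijective.mp hσ)
  have hpow (k : ℕ) (u : E.solSpace) (n : ℕ) : ((e ^ k) u).1 n = u.1 (n + k) := by
    induction k generalizing u with
    | zero => rfl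
    | succ k ih => rw [pow_succ, Equiv.Perm.mul_apply, ih]; rfl
  refine ⟨orderOf e, orderOf_pos e, fun u hu n ↦ ?_⟩
  simpa only [pow_orderOf_eq_one, Equiv.Perm.one_apply] using (hpow (orderOf e) ⟨u, hu⟩ n).symm

theorem fwdDiff_iter_mem_pow {R : Type*} [CommRing R] {E : LinearRecurrence R} {I : Ideal R}
    {N : ℕ} (hI : ∀ u, E.IsSolution u → ∀ n, Δ_[N] u n ∈ I) {u : ℕ → R} (hu : E.IsSolution u)
    (j n : ℕ) : Δ_[N] ^[j] u n ∈ I ^ j := by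
  induction j generalizing u with
  | zero => simp only [pow_zero, Ideal.one_eq_top, Submodule.mem_top]
  | succ j ih =>
    rw [Function.iterate_succ_apply, eq_sum_smul_basis (isSolution_fwdDiff hu N),
      fwdDiff_iter_finsetSum, Finset.sum_apply, pow_succ']
    refine Ideal.sum_mem _ fun i _ ↦ ?_
    rw [fwdDiff_iter_const_smul, Pi.smul_apply, smul_eq_mul]
    exact Ideal.mul_mem_mul (hI u hu i) (ih (E.basis i).2)

theorem exists_pos_forall_fwdDiff_iter_mem_pow {R : Type*} [CommRing R] (I : Ideal R)
    [Finite (R ⧸ I)] (E : LinearRecurrence R) [NeZero E.order] (h0 : IsUnit (E.coeffs 0)) :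
    ∃ N, 0 < N ∧ ∀ u, E.IsSolution u → ∀ j n, Δ_[N] ^[j] u n ∈ I ^ j := by
  let E' : LinearRecurrence (R ⧸ I) := ⟨E.order, Ideal.Quotient.mk I ∘ E.coeffs⟩
  have : NeZero E'.order := ‹NeZero E.order›
  obtain ⟨N, hN, hper⟩ := exists_pos_forall_isSolution_periodic E' (h0.map _)
  refine ⟨N, hN, fun u hu ↦ fwdDiff_iter_mem_pow (fun v hv n ↦ ?_) hu⟩
  exact Ideal.Quotient.eq.mp (hper _ (isSolution_comp_ringHom hv _) n)

theorem fwdDiff_iter_comp_addMonoidHom {M G H : Type*} [AddCommMonoid M] [AddCommGroup G]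
    [AddCommGroup H] (g : G →+ H) (h : M) (f : M → G) (j : ℕ) (x : M) :
    Δ_[h] ^[j] (g ∘ f) x = g (Δ_[h] ^[j] f x) := by
  simp only [fwdDiff_iter_eq_sum_shift, map_sum, map_zsmul, Function.comp_apply]

theorem semilinear_zeros_of_finiteType_int {A : Type*} [CommRing A] [IsDomain A] [CharZero A]
    [Algebra.FiniteType ℤ A] {E : LinearRecurrence A} [NeZero E.order] (h0 : IsUnit (E.coeffs 0))
    {u : ℕ → A} (hu : E.IsSolution u) : Semilinear {n | u n = 0} := by
  obtain ⟨p, R, _, _, _, f, hp, hf, hpR, hfin⟩ :=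
    exists_prime_isNoetherianRing_finite_quotient_comap A two_ne_zero
  have := f.charZero_iff hf |>.mp ‹_›
  obtain ⟨N, hN, hmem⟩ :=
    exists_pos_forall_fwdDiff_iter_mem_pow ((Ideal.span {(p : R) ^ 2}).comap f) E h0
  have hdvd (r j) : (p : R) ^ (2 * j) ∣ Δ_[N] ^[j] (f ∘ u) r := by
    have h : f (Δ_[N] ^[j] u r) ∈ Ideal.span {(p : R) ^ 2} ^ j :=
      Ideal.le_comap_pow f j (hmem u hu j r)
    rwa [Ideal.span_singleton_pow, Ideal.mem_span_singleton, ← pow_mul,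
      ← AddMonoidHom.coe_coe f, ← fwdDiff_iter_comp_addMonoidHom] at h
  have hzero (n) : f (u n) = 0 ↔ u n = 0 := map_eq_zero_iff f hf
  refine semilinear_of_modulus hN fun r hinf k ↦ ?_
  have h := eq_zero_of_infinite_zeros_of_pow_dvd_fwdDiff hp hpR (hdvd r)
  simp only [Function.comp_apply, hzero, smul_eq_mul, add_comm r, mul_comm _ N] at h
  exact h hinf k

theorem semilinear_zeros_of_coeffs_zero_ne_zero {F : Type*} [Field F] [CharZero F]
    {E : LinearRecurrence F} [NeZero E.order] (h0 : E.coeffs 0 ≠ 0) {u : ℕ → F}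
    (hu : E.IsSolution u) : Semilinear {n | u n = 0} := by
  let A := Algebra.adjoin ℤ
    ({(E.coeffs 0)⁻¹} ∪ Set.range E.coeffs ∪ Set.range fun i : Fin E.order ↦ u i)
  have hinv : (E.coeffs 0)⁻¹ ∈ A := Algebra.subset_adjoin (.inl (.inl rfl))
  have hcoeffs (i) : E.coeffs i ∈ A := Algebra.subset_adjoin (.inl (.inr ⟨i, rfl⟩))
  have hinit (i : Fin E.order) : u i ∈ A := Algebra.subset_adjoin (.inr ⟨i, rfl⟩)
  have := A.fg_iff_finiteType.mp (Subalgebra.fg_def.mpr ⟨_, Set.toFinite _, rfl⟩)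
  let E' : LinearRecurrence A := ⟨E.order, fun i ↦ ⟨E.coeffs i, hcoeffs i⟩⟩
  have : NeZero E'.order := ‹NeZero E.order›
  have h0' : IsUnit (E'.coeffs 0) := .of_mul_eq_one ⟨_, hinv⟩ (Subtype.ext (mul_inv_cancel₀ h0))
  let init (i : Fin E.order) : A := ⟨u i, hinit i⟩
  have hu' : E'.IsSolution (E'.mkSol init) := E'.is_sol_mkSol init
  have huu' : u = (↑) ∘ E'.mkSol init :=
    (E.eq_iff_eqOn_range_order _ _ hu (isSolution_comp_ringHom hu' A.val.toRingHom)).mpr fun i hi ↦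
      congrArg Subtype.val (E'.mkSol_eq_init init ⟨i, Finset.mem_range.mp hi⟩).symm
  simpa only [huu', Function.comp_apply, ZeroMemClass.coe_eq_zero]
    using semilinear_zeros_of_finiteType_int h0' hu'

end

/-- **Skolem–Mahler–Lech.** In a field of characteristic 0, the zero set of a
sequence satisfying a linear recurrence is semilinear. -/
theorem stmt_1 {F : Type*} [Field F] [CharZero F]
    (d : ℕ) (hd : 1 ≤ d) (c : Fin d → F) (a : ℕ → F)
    (hrec : ∀ n : ℕ, a (n + d) = ∑ i : Fin d, c i * a (n + i)) :
    Semilinear {n : ℕ | a n = 0} := by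
  clear hd
  induction d generalizing a with
  | zero =>
    have h (n) : a n = 0 := by simpa using hrec n
    exact semilinear_of_modulus le_rfl fun r _ k ↦ h _
  | succ d ih =>
    by_cases hc : c 0 = 0
    · refine Semilinear.of_preimage_succ (ih (fun i ↦ c i.succ) (fun n ↦ a (n + 1)) fun n ↦ ?_)
      have h := hrec n
      rw [Fin.sum_univ_succ, hc, zero_mul, zero_add] at h
      simpa [add_assoc, add_comm, add_left_comm] using h
    · exact semilinear_zeros_of_coeffs_zero_ne_zero (E := ⟨d + 1, c⟩) hc hrec
end

section
/- Let V be a finite-dimensional complex inner product space, M : V → V a linear map, and φ, ψ ∈ V. Then the set {n ∈ ℕ | ⟨φ, M^n ψ⟩ = 0} is semilinear, i.e., it is the union of a finite set and finitely many arithmetic progressions of the form {a k + b : k ∈ ℕ} with a ≥ 1. -/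
open scoped InnerProductSpace

/-!
This is the Skolem–Mahler–Lech theorem, proved by `p`-adic interpolation. For a linear functional
`f`, write `f (M ^ n v)` as the trace of `C * U ^ n` with matrices `C` and `U`, where `C` has
rank at most one; after a shift of `n`, Fitting's lemma makes `U` invertible.
The entries of `C`, `U` and `U⁻¹` generate a ring that embeds in a domain `A` finite over some
`ℤ_[p]`: send a transcendence basis to algebraically independent `p`-adic integers at which a
common denominator of the remaining generators is a unit.

As `A ⧸ (p ^ 2)` is finite, `U ^ N = 1 + p ^ 2 • b` for some `N > 0`, and the binomial expansion
shows that, modulo any nonzero `d`, each `k ↦ tr (C * U ^ (N * k + r))` is a polynomial in `p * k`.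
If this function has infinitely many zeros, then `m` of them let one split off `m` linear factors
modulo a power of `p`. Every such factor is divisible by `p` at the points `p * k`, so all values
are divisible by `p ^ m` for every `m`, hence vanish.
-/

namespace Semilinear

theorem of_finite {Z : Set ℕ} (hZ : Z.Finite) : Semilinear Z :=
  ⟨hZ.toFinset, ∅, by simp⟩

theorem progression {a : ℕ} (ha : 1 ≤ a) (b : ℕ) : Semilinear {n | ∃ k, n = a * k + b} :=
  ⟨∅, {(a, b)}, by simpa using ha, by simp⟩

theorem union {Y Z : Set ℕ} : Semilinear Y → Semilinear Z → Semilinear (Y ∪ Z) := by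
  classical
  rintro ⟨F, s, hs, rfl⟩ ⟨G, t, ht, rfl⟩
  refine ⟨F ∪ G, s ∪ t, fun q hq => (Finset.mem_union.1 hq).elim (hs q) (ht q), ?_⟩
  rw [Finset.coe_union, Finset.set_biUnion_union, Set.union_union_union_comm]

theorem biUnion_finset {ι : Type*} (s : Finset ι) {Z : ι → Set ℕ} (hZ : ∀ i ∈ s, Semilinear (Z i)) :
    Semilinear (⋃ i ∈ s, Z i) := by
  classical
  induction s using Finset.induction_on with
  | empty => simpa using of_finite Set.finite_empty
  | insert i s _ ih =>
    rw [Finset.set_biUnion_insert]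
    exact (hZ i (Finset.mem_insert_self i s)).union
      (ih fun j hj => hZ j (Finset.mem_insert_of_mem hj))

theorem image_add_right {Z : Set ℕ} (hZ : Semilinear Z) (e : ℕ) : Semilinear ((· + e) '' Z) := by
  obtain ⟨F, s, hs, rfl⟩ := hZ
  simp only [Set.image_union, Set.image_iUnion]
  refine (of_finite (F.finite_toSet.image _)).union (biUnion_finset s fun q hq => ?_)
  convert! progression (hs q hq) (q.2 + e) using 1
  ext n
  simp [eq_comm, add_assoc]

theorem of_preimage_add_right {Z : Set ℕ} (e : ℕ) (hZ : Semilinear {n | n + e ∈ Z}) :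
    Semilinear Z := by
  have hsplit : Z = {n ∈ Z | n < e} ∪ (· + e) '' {n | n + e ∈ Z} := by
    ext n
    constructor
    · intro hn
      rcases lt_or_ge n e with hlt | hge
      · exact .inl ⟨hn, hlt⟩
      · exact .inr ⟨n - e, by simpa [Nat.sub_add_cancel hge] using hn, Nat.sub_add_cancel hge⟩
    · rintro (hn | ⟨m, hm, rfl⟩)
      exacts [hn.1, hm]
  rw [hsplit]
  exact (of_finite ((Set.finite_Iio e).subset fun _ hn => hn.2)).union (hZ.image_add_right e)

theorem of_forall_residue {Z : Set ℕ} {N : ℕ} (hN : 0 < N)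
    (hZ : ∀ r, {k | N * k + r ∈ Z}.Infinite → ∀ k, N * k + r ∈ Z) : Semilinear Z := by
  have hsplit : Z = ⋃ r ∈ Finset.range N, (fun k => N * k + r) '' {k | N * k + r ∈ Z} := by
    ext n
    simp only [Set.mem_iUnion, Finset.mem_range, Set.mem_image, Set.mem_ofPred_eq, exists_prop]
    constructor
    · intro hn
      exact ⟨n % N, Nat.mod_lt n hN, n / N, by rwa [Nat.div_add_mod], Nat.div_add_mod n N⟩
    · rintro ⟨r, -, k, hk, rfl⟩
      exact hk
  rw [hsplit]
  refine biUnion_finset _ fun r _ => ?_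
  by_cases hinf : {k | N * k + r ∈ Z}.Infinite
  · convert! progression hN r using 1
    ext n
    simp [hZ r hinf, eq_comm]
  · exact of_finite ((Set.not_infinite.1 hinf).image _)

end Semilinear

section PolynomialApproximation

open Polynomial
open scoped Nat Finset

variable {A : Type*} [CommRing A] [IsDomain A]

-- One factor `p ^ j` clears the denominator `j !` of the binomial coefficient, the other turns a
-- polynomial in `k` into one in `p * k`.
theorem exists_polynomial_eval_eq_choose_mul_pow {p j : ℕ} (hj : (j ! : A) ∣ (p : A) ^ j) :
    ∃ P : A[X], ∀ k : ℕ, P.eval (p * k : A) = k.choose j * (p : A) ^ (2 * j) := by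
  obtain ⟨w, hw⟩ := hj
  refine ⟨C w * (descPochhammer A j).scaleRoots p, fun k => ?_⟩
  have hscale := scaleRoots_eval₂_mul (p := descPochhammer A j) (RingHom.id A) k (p : A)
  rw [descPochhammer_natDegree] at hscale
  simp only [RingHom.id_apply, eval₂_id, descPochhammer_eval_eq_descFactorial,
    Nat.descFactorial_eq_factorial_mul_choose, Nat.cast_mul] at hscale
  rw [eval_mul, eval_C, hscale]
  linear_combination (-(k.choose j : A) * (p : A) ^ j) * hw

theorem exists_polynomial_dvd_linearMap_one_add_pow_sub {B : Type*} [Ring B] [Algebra A B]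
    {p : ℕ} (hp : ∀ j, (j ! : A) ∣ (p : A) ^ j) (L : B →ₗ[A] A) (b : B) (T : ℕ) :
    ∃ Q : A[X], ∀ k : ℕ,
      (p : A) ^ T ∣ L ((1 + (p : A) ^ 2 • b) ^ k) - Q.eval (p * k : A) := by
  choose P hP using fun j => exists_polynomial_eval_eq_choose_mul_pow (hp j)
  refine ⟨∑ j ∈ Finset.range T, P j * C (L (b ^ j)), fun k => ?_⟩
  let term (j : ℕ) : A := k.choose j * (p : A) ^ (2 * j) * L (b ^ j)
  have hbinom : L ((1 + (p : A) ^ 2 • b) ^ k) = ∑ j ∈ Finset.range (k + 1 + T), term j := by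
    rw [add_comm 1, (Commute.one_right _).add_pow, map_sum, Finset.sum_range_add _ (k + 1),
      Finset.sum_eq_zero (s := Finset.range T), add_zero]
    · refine Finset.sum_congr rfl fun j _ => ?_
      rw [one_pow, mul_one, _root_.smul_pow, ← nsmul_eq_mul', map_nsmul, map_smul, nsmul_eq_mul,
        smul_eq_mul, ← pow_mul, ← mul_assoc]
    · intro j _
      simp [term, Nat.choose_eq_zero_of_lt (show k < k + 1 + j by omega)]
  have hQ : (∑ j ∈ Finset.range T, P j * C (L (b ^ j))).eval (p * k : A) =
      ∑ j ∈ Finset.range T, term j := by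
    simp [eval_finsetSum, hP, term]
  rw [hbinom, hQ, add_comm, Finset.sum_range_add, add_sub_cancel_left]
  exact Finset.dvd_sum fun j _ => ((pow_dvd_pow _ (by omega)).mul_left _).mul_right _

theorem exists_dvd_eval_sub_prod_sub_mul_eval (s : Finset A) :
    ∃ d : A, d ≠ 0 ∧ ∀ (c : A) (Q : A[X]), (∀ a ∈ s, d * c ∣ Q.eval a) →
      ∃ G : A[X], ∀ x, c ∣ Q.eval x - (∏ a ∈ s, (x - a)) * G.eval x := by
  classical
  induction s using Finset.induction_on with
  | empty => exact ⟨1, one_ne_zero, fun c Q _ => ⟨Q, by simp⟩⟩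
  | insert b s hb ih =>
    obtain ⟨d, hd, ih⟩ := ih
    have hprod : ∏ a ∈ s, (a - b) ≠ 0 :=
      Finset.prod_ne_zero_iff.2 fun a ha => sub_ne_zero.2 (ne_of_mem_of_not_mem ha hb)
    refine ⟨(∏ a ∈ s, (a - b)) * d, mul_ne_zero hprod hd, fun c Q hQ => ?_⟩
    have hQb := hQ b (Finset.mem_insert_self b s)
    set D := Q /ₘ (X - C b)
    have hD (x : A) : Q.eval x = Q.eval b + (x - b) * D.eval x := by
      conv_lhs => rw [← modByMonic_add_div Q (X - C b), modByMonic_X_sub_C_eq_C_eval]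
      simp [D]
    have hDs : ∀ a ∈ s, d * c ∣ D.eval a := by
      intro a ha
      have hdiff : (∏ a ∈ s, (a - b)) * d * c ∣ (a - b) * D.eval a := by
        simpa [hD a] using dvd_sub (hQ a (Finset.mem_insert_of_mem ha)) hQb
      refine (mul_dvd_mul_iff_left (sub_ne_zero.2 (ne_of_mem_of_not_mem ha hb))).1
        (dvd_trans ?_ hdiff)
      rw [mul_assoc]
      exact mul_dvd_mul_right (Finset.dvd_prod_of_mem (· - b) ha) _
    obtain ⟨G, hG⟩ := ih c D hDs
    refine ⟨G, fun x => ?_⟩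
    rw [Finset.prod_insert hb, hD x, add_sub_assoc, mul_assoc, ← mul_sub]
    exact dvd_add ((dvd_mul_left c _).trans hQb) ((hG x).mul_left _)

variable {ι : Type*} {π : A} {f y : ι → A}

theorem pow_dvd_of_infinite_zeros (hπ : π ≠ 0) (hy : Function.Injective y) (hπy : ∀ i, π ∣ y i)
    (hf : ∀ d ≠ 0, ∃ Q : A[X], ∀ i, d ∣ f i - Q.eval (y i)) (hzeros : {i | f i = 0}.Infinite)
    (m : ℕ) (i : ι) : π ^ m ∣ f i := by
  classical
  obtain ⟨s, hs, rfl⟩ := hzeros.exists_subset_card_eq m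
  obtain ⟨d, hd, hdiv⟩ := exists_dvd_eval_sub_prod_sub_mul_eval (s.map ⟨y, hy⟩)
  obtain ⟨Q, hQ⟩ := hf (d * π ^ #s) (mul_ne_zero hd (pow_ne_zero _ hπ))
  have hQs : ∀ a ∈ s.map ⟨y, hy⟩, d * π ^ #s ∣ Q.eval a := by
    intro a ha
    obtain ⟨j, hj, rfl⟩ := Finset.mem_map.1 ha
    simpa [show f j = 0 from hs hj] using hQ j
  obtain ⟨G, hG⟩ := hdiv (π ^ #s) Q hQs
  have hprod : π ^ #s ∣ ∏ a ∈ s.map ⟨y, hy⟩, (y i - a) := by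
    rw [Finset.prod_map, ← Finset.prod_const]
    exact Finset.prod_dvd_prod_of_dvd _ _ fun j _ => dvd_sub (hπy i) (hπy j)
  have hQi : π ^ #s ∣ Q.eval (y i) := (dvd_sub_left (hprod.mul_right _)).1 (hG (y i))
  exact (dvd_sub_left hQi).1 ((dvd_mul_left _ d).trans (hQ i))

theorem eq_zero_of_infinite_zeros [IsNoetherianRing A] (hπ : π ≠ 0) (hπu : ¬IsUnit π)
    (hy : Function.Injective y) (hπy : ∀ i, π ∣ y i)
    (hf : ∀ d ≠ 0, ∃ Q : A[X], ∀ i, d ∣ f i - Q.eval (y i)) (hzeros : {i | f i = 0}.Infinite)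
    (i : ι) : f i = 0 := by
  have hkrull := Ideal.iInf_pow_eq_bot_of_isDomain _ (mt Ideal.span_singleton_eq_top.1 hπu)
  rw [← Ideal.mem_bot, ← hkrull, Ideal.mem_iInf]
  intro m
  rw [Ideal.span_singleton_pow, Ideal.mem_span_singleton]
  exact pow_dvd_of_infinite_zeros hπ hy hπy hf hzeros m i

end PolynomialApproximation

theorem exists_units_pow_eq_one_add_smul {R B : Type*} [CommRing R] [Ring.HasFiniteQuotients R]
    [Ring B] [Algebra R B] [Module.Finite R B] {a : R} (ha : a ≠ 0) (u : Bˣ) :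
    ∃ N > 0, ∃ b : B, (u : B) ^ N = 1 + a • b := by
  let I : Submodule R B := Ideal.span {a} • ⊤
  have : Finite (R ⧸ Ideal.span {a}) :=
    Ring.HasFiniteQuotients.finiteQuotient (by simpa using ha)
  have : Finite (B ⧸ I) := Submodule.finite_quotient_smul _ Module.Finite.fg_top
  obtain ⟨m, n, hlt, heq⟩ : ∃ m n, m < n ∧ I.mkQ (u ^ m) = I.mkQ (u ^ n) := by
    simpa using Set.infinite_univ.exists_lt_map_eq_of_mapsTo
      (f := fun n : ℕ => I.mkQ (u ^ n)) (Set.mapsTo_univ _ _) Set.finite_univ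
  have hmem : (u : B) ^ n - u ^ m ∈ Ideal.span {a} • (⊤ : Submodule R B) :=
    (Submodule.Quotient.eq I).1 heq.symm
  rw [Submodule.ideal_span_singleton_smul, Submodule.mem_smul_pointwise_iff_exists] at hmem
  obtain ⟨b, -, hb⟩ := hmem
  have hsplit : (u : B) ^ n = u ^ m * u ^ (n - m) := by rw [← pow_add, Nat.add_sub_cancel' hlt.le]
  refine ⟨n - m, Nat.sub_pos_of_lt hlt, ↑(u ^ m)⁻¹ * b, ?_⟩
  rw [← mul_smul_comm, show a • b = _ from hb, hsplit, mul_sub, ← Units.val_pow_eq_pow_val u m,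
    Units.inv_mul_cancel_left, Units.inv_mul, add_sub_cancel]

section PadicInt

open scoped Nat

variable {p : ℕ} [Fact p.Prime]

theorem padicInt_dvd_pow_valuation {x : ℤ_[p]} (hx : x ≠ 0) : x ∣ (p : ℤ_[p]) ^ x.valuation := by
  nth_rw 1 [PadicInt.unitCoeff_spec hx]
  simp

theorem padicInt_factorial_dvd_pow (j : ℕ) : (j ! : ℤ_[p]) ∣ (p : ℤ_[p]) ^ j := by
  have hval : (j ! : ℤ_[p]).valuation = padicValNat p j ! := by
    rw [← Nat.cast_inj (R := ℤ), ← PadicInt.valuation_coe, PadicInt.coe_natCast,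
      Padic.valuation_natCast]
  refine (padicInt_dvd_pow_valuation (by exact_mod_cast j.factorial_ne_zero)).trans
    (pow_dvd_pow _ ?_)
  rw [hval]
  exact padicValNat_factorial_le (p := p) j

theorem padicInt_hasFiniteQuotients : Ring.HasFiniteQuotients ℤ_[p] where
  finiteQuotient {I} hI := by
    obtain ⟨n, rfl⟩ := PadicInt.ideal_eq_span_pow_p hI
    rw [← PadicInt.ker_toZModPow]
    exact Finite.of_injective _ (RingHom.kerLift_injective (PadicInt.toZModPow (p := p) n))

theorem exists_dvd_natCast_pow_of_isAlgebraic_padicInt {A : Type*} [CommRing A] [IsDomain A]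
    [Algebra ℤ_[p] A] [Algebra.IsAlgebraic ℤ_[p] A] {d : A} (hd : d ≠ 0) :
    ∃ T : ℕ, d ∣ (p : A) ^ T := by
  obtain ⟨x, hx, hdx⟩ := (Algebra.IsAlgebraic.isAlgebraic d).exists_nonzero_dvd (R := ℤ_[p])
    (mem_nonZeroDivisors_of_ne_zero hd)
  refine ⟨x.valuation, hdx.trans ?_⟩
  simpa using map_dvd (algebraMap ℤ_[p] A) (padicInt_dvd_pow_valuation hx)

variable (p) in
theorem semilinear_setOf_linearMap_units_pow_eq_zero {A : Type*} [CommRing A]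
    [IsDomain A] [Algebra ℤ_[p] A] [FaithfulSMul ℤ_[p] A] [Module.Finite ℤ_[p] A]
    {B : Type*} [Ring B] [Algebra A B] [Module.Finite A B] (L : B →ₗ[A] A) (u : Bˣ) :
    Semilinear {n : ℕ | L (u ^ n) = 0} := by
  have := padicInt_hasFiniteQuotients (p := p)
  have : Ring.HasFiniteQuotients A := .of_module_finite ℤ_[p] A
  have : CharZero A := charZero_of_injective_algebraMap (FaithfulSMul.algebraMap_injective ℤ_[p] A)
  have hp : (p : A) ≠ 0 := Nat.cast_ne_zero.2 (Fact.out : p.Prime).ne_zero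
  have hpu : ¬IsUnit (p : A) := by
    have := Algebra.IsIntegral.isLocalHom ℤ_[p] A
    rw [← map_natCast (algebraMap ℤ_[p] A), isUnit_map_iff]
    exact PadicInt.p_nonunit
  have hfact (j : ℕ) : (j ! : A) ∣ (p : A) ^ j := by
    simpa using map_dvd (algebraMap ℤ_[p] A) (padicInt_factorial_dvd_pow j)
  obtain ⟨N, hN, b, hb⟩ := exists_units_pow_eq_one_add_smul (pow_ne_zero 2 hp) u
  refine .of_forall_residue hN fun r hinf k => ?_
  refine eq_zero_of_infinite_zeros (f := fun k : ℕ => L (u ^ (N * k + r)))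
    (y := fun k => (p * k : A)) hp hpu (fun k l hkl => by simpa [hp] using hkl)
    (fun k => dvd_mul_right _ _) (fun d hd => ?_) hinf k
  obtain ⟨T, hT⟩ := exists_dvd_natCast_pow_of_isAlgebraic_padicInt (p := p) hd
  obtain ⟨Q, hQ⟩ := exists_polynomial_dvd_linearMap_one_add_pow_sub hfact
    (L ∘ₗ LinearMap.mulRight A (u ^ r : B)) b T
  refine ⟨Q, fun k => hT.trans ?_⟩
  simpa [pow_add, pow_mul, hb] using hQ k

end PadicInt

section AlgebraicIndependence

open Polynomial

theorem exists_algebraicIndependent_of_uncountable (ι R A : Type*) [Countable ι] [CommRing R]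
    [Countable R] [CommRing A] [IsDomain A] [Uncountable A] [Algebra R A] [FaithfulSMul R A] :
    ∃ t : ι → A, AlgebraicIndependent R t := by
  have : Nontrivial R := Module.nontrivial R A
  obtain ⟨κ, x, hx⟩ := exists_isTranscendenceBasis' R A
  have : Infinite κ := by
    by_contra hfin
    have : Finite κ := not_infinite_iff_finite.1 hfin
    have := hx.isAlgebraic
    have : Countable (Algebra.adjoin R (Set.range x)) := by
      rw [← hx.1.aevalEquiv.toEquiv.countable_iff, ← Cardinal.mk_le_aleph0_iff]
      refine MvPolynomial.cardinalMk_le_max_lift.trans ?_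
      simp
    have hcount := Algebraic.countable (Algebra.adjoin R (Set.range x)) A
    simp [Algebra.IsAlgebraic.isAlgebraic, Set.countable_univ_iff] at hcount
  obtain ⟨e, he⟩ := exists_injective_nat ι
  exact ⟨x ∘ Infinite.natEmbedding κ ∘ e, hx.1.comp _ ((Infinite.natEmbedding κ).injective.comp he)⟩

theorem uncountable_padicInt (p : ℕ) [Fact p.Prime] : Uncountable ℤ_[p] := by
  have := continuum_le_cardinal_of_nontriviallyNormedField ℚ_[p]
  rw [IsFractionRing.cardinalMk ℤ_[p] ℚ_[p]] at this
  exact Cardinal.aleph0_lt_mk_iff.1 (Cardinal.aleph0_lt_continuum.trans_le this)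

variable {ι : Type*} [Countable ι]

theorem exists_algebraicIndependent_toZMod_eq (p : ℕ) [Fact p.Prime] (a : ι → ℤ) :
    ∃ t : ι → ℤ_[p], AlgebraicIndependent ℤ t ∧ ∀ i, PadicInt.toZMod (t i) = a i := by
  have := uncountable_padicInt p
  obtain ⟨z, hz⟩ := exists_algebraicIndependent_of_uncountable ι ℤ ℤ_[p]
  have hp : (p : ℤ) ≠ 0 := Nat.cast_ne_zero.2 (Fact.out : p.Prime).ne_zero
  have htrans (i : ι) : Transcendental ℤ (C (p : ℤ) * X + C (a i)) := by
    refine Polynomial.transcendental _ ?_ ?_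
    · rw [natDegree_linear hp]
      exact one_ne_zero
    · rw [leadingCoeff_linear hp]
      exact mem_nonZeroDivisors_of_ne_zero hp
  exact ⟨_, hz.polynomial_aeval_of_transcendental htrans, fun i => by simp⟩

theorem exists_algebraicIndependent_isUnit_aeval {g : MvPolynomial ι ℤ} (hg : g ≠ 0) :
    ∃ (p : ℕ) (_ : Fact p.Prime) (t : ι → ℤ_[p]),
      AlgebraicIndependent ℤ t ∧ IsUnit (MvPolynomial.aeval t g) := by
  obtain ⟨a, ha⟩ : ∃ a : ι → ℤ, MvPolynomial.eval a g ≠ 0 := by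
    by_contra! hzero
    exact hg (MvPolynomial.funext fun a => by simpa using hzero a)
  obtain ⟨p, hlt, hp⟩ := Nat.exists_infinite_primes ((MvPolynomial.eval a g).natAbs + 1)
  have : Fact p.Prime := ⟨hp⟩
  obtain ⟨t, ht, hta⟩ := exists_algebraicIndependent_toZMod_eq p a
  refine ⟨p, this, t, ht, ?_⟩
  have hmod : PadicInt.toZMod (MvPolynomial.aeval t g) = (MvPolynomial.eval a g : ZMod p) := by
    have hcomp : PadicInt.toZMod.comp (MvPolynomial.aeval t).toRingHom =
        (Int.castRingHom (ZMod p)).comp (MvPolynomial.eval a) := by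
      ext i <;> simp [hta]
    exact DFunLike.congr_fun hcomp g
  by_contra hnu
  rw [← mem_nonunits_iff, ← IsLocalRing.mem_maximalIdeal, ← PadicInt.ker_toZMod,
    RingHom.mem_ker, hmod, ZMod.intCast_zmod_eq_zero_iff_dvd, Int.natCast_dvd] at hnu
  exact absurd (Nat.le_of_dvd (Int.natAbs_pos.2 ha) hnu) (by omega)

end AlgebraicIndependence

section Embedding

theorem exists_injective_ringHom_finite_algebra.{u, v, w} {P : Type u} {O : Type v} {R : Type w}
    [CommRing P] [CommRing O] [IsDomain O] [CommRing R] [IsDomain R] [Algebra P O]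
    [FaithfulSMul P O] [Algebra P R] [FaithfulSMul P R] [Algebra.IsAlgebraic P R] {S : Set R}
    (hS : S.Finite) (hgen : Algebra.adjoin P S = ⊤) {g : P} (hg : IsUnit (algebraMap P O g))
    (hint : ∀ s ∈ S, IsIntegral P (g • s)) :
    ∃ (A : Type v) (_ : CommRing A) (_ : IsDomain A) (_ : Algebra O A),
      FaithfulSMul O A ∧ Module.Finite O A ∧ ∃ σ : R →+* A, Function.Injective σ := by
  let L := AlgebraicClosure (FractionRing O)
  have : IsDomain P := (FaithfulSMul.algebraMap_injective P O).isDomain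
  have hOL : FaithfulSMul O L := .trans O (FractionRing O) L
  have hPL : FaithfulSMul P L := .trans P O L
  let σ : R →ₐ[P] L := IsAlgClosed.lift
  have hσ : Function.Injective σ := by
    refine (injective_iff_map_eq_zero σ).2 fun r hr => by_contra fun hr0 => ?_
    obtain ⟨x, hx, y, hxy⟩ := (Algebra.IsAlgebraic.isAlgebraic r).exists_nonzero_dvd (R := P)
      (mem_nonZeroDivisors_of_ne_zero hr0)
    have hx0 : algebraMap P L x = 0 := by rw [← σ.commutes, hxy, map_mul, hr, zero_mul]
    exact hx ((FaithfulSMul.algebraMap_eq_zero_iff P L).1 hx0)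
  have hσS : ∀ s ∈ S, IsIntegral O (σ s) := by
    intro s hs
    have hgs : IsIntegral O (algebraMap P O g • σ s) := by
      simpa [algebraMap_smul] using ((hint s hs).map σ).tower_top (A := O)
    obtain ⟨u, hu⟩ := hg
    simpa [← hu, smul_smul] using hgs.smul (↑u⁻¹ : O)
  let A := Algebra.adjoin O (σ '' S)
  have hσA (r : R) : σ r ∈ A := by
    have : (⊤ : Subalgebra P R) ≤ (A.restrictScalars P).comap σ := by
      rw [← hgen, Algebra.adjoin_le_iff]
      exact fun s hs => Algebra.subset_adjoin ⟨s, hs, rfl⟩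
    exact this Algebra.mem_top
  have hOA : FaithfulSMul O A := (faithfulSMul_iff_algebraMap_injective O A).2
    (.of_comp (f := A.val) (FaithfulSMul.algebraMap_injective O L))
  exact ⟨A, inferInstance, inferInstance, inferInstance, hOA,
    Algebra.finite_adjoin_of_finite_of_isIntegral (hS.image σ) (by simpa using hσS),
    σ.toRingHom.codRestrict A hσA, fun _ _ h => hσ congr(A.val $h)⟩

theorem exists_injective_ringHom_padicInt_isUnit {ι P : Type*} [Countable ι] [CommRing P]
    (e : MvPolynomial ι ℤ ≃+* P) {g : P} (hg : g ≠ 0) :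
    ∃ (p : ℕ) (_ : Fact p.Prime) (θ : P →+* ℤ_[p]), Function.Injective θ ∧ IsUnit (θ g) := by
  obtain ⟨p, hp, t, ht, hunit⟩ := exists_algebraicIndependent_isUnit_aeval
    (g := e.symm g) (by simpa using hg)
  exact ⟨p, hp, (MvPolynomial.aeval t).toRingHom.comp e.symm.toRingHom,
    (algebraicIndependent_iff_injective_aeval.1 ht).comp e.symm.injective, hunit⟩

theorem exists_injective_ringHom_finite_padicInt_algebra (R : Type*) [CommRing R] [IsDomain R]
    [CharZero R] [Algebra.FiniteType ℤ R] :
    ∃ (p : ℕ) (_ : Fact p.Prime) (A : Type) (_ : CommRing A) (_ : IsDomain A)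
      (_ : Algebra ℤ_[p] A), FaithfulSMul ℤ_[p] A ∧ Module.Finite ℤ_[p] A ∧
      ∃ σ : R →+* A, Function.Injective σ := by
  obtain ⟨S, hS⟩ := ‹Algebra.FiniteType ℤ R›.out
  have : Algebra.IsAlgebraic (Algebra.adjoin ℤ (S : Set R)) R :=
    ⟨fun r => isAlgebraic_algebraMap (⟨r, hS ▸ Algebra.mem_top⟩ : Algebra.adjoin ℤ (S : Set R))⟩
  obtain ⟨b, hbS, hb⟩ := exists_isTranscendenceBasis_subset (R := ℤ) (S : Set R)
  have : Finite b := S.finite_toSet.subset hbS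
  let P := Algebra.adjoin ℤ (Set.range ((↑) : b → R))
  have : Algebra.IsAlgebraic P R := hb.isAlgebraic
  obtain ⟨g, hg, hint⟩ := Algebra.IsAlgebraic.exists_integral_multiples (R := P) S
  obtain ⟨p, hp, θ, hθ, hunit⟩ :=
    exists_injective_ringHom_padicInt_isUnit hb.1.aevalEquiv.toRingEquiv hg
  let : Algebra P ℤ_[p] := θ.toAlgebra
  have : FaithfulSMul P ℤ_[p] := (faithfulSMul_iff_algebraMap_injective P ℤ_[p]).2 hθ
  have hgen : Algebra.adjoin P (S : Set R) = ⊤ := by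
    have hle : Algebra.adjoin ℤ (S : Set R) ≤ (Algebra.adjoin P (S : Set R)).restrictScalars ℤ :=
      Algebra.adjoin_le Algebra.subset_adjoin
    exact eq_top_iff.2 fun r _ =>
      (Subalgebra.mem_restrictScalars ℤ).1 (hle (hS ▸ Algebra.mem_top))
  exact ⟨p, hp, exists_injective_ringHom_finite_algebra S.finite_toSet hgen hunit hint⟩

end Embedding

section Matrix

variable {m : Type*} [Fintype m] [DecidableEq m]

theorem trace_mapMatrix_mul_pow_eq_zero_iff {R A : Type*} [CommRing R] [CommRing A] {σ : R →+* A}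
    (hσ : Function.Injective σ) (C X : Matrix m m R) (n : ℕ) :
    (σ.mapMatrix C * σ.mapMatrix X ^ n).trace = 0 ↔ (C * X ^ n).trace = 0 := by
  rw [← map_pow, ← map_mul, RingHom.mapMatrix_apply, ← AddMonoidHom.map_trace,
    map_eq_zero_iff σ hσ]

theorem semilinear_setOf_trace_mul_pow_eq_zero_of_finiteType {R : Type*} [CommRing R] [IsDomain R]
    [CharZero R] [Algebra.FiniteType ℤ R] (C : Matrix m m R) (U : (Matrix m m R)ˣ) :
    Semilinear {n : ℕ | (C * (U : Matrix m m R) ^ n).trace = 0} := by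
  obtain ⟨p, _, A, _, _, _, _, _, σ, hσ⟩ := exists_injective_ringHom_finite_padicInt_algebra R
  have hsemi := semilinear_setOf_linearMap_units_pow_eq_zero p
    (Matrix.traceLinearMap m A A ∘ₗ LinearMap.mulLeft A (σ.mapMatrix C))
    (Units.map (σ.mapMatrix (m := m)).toMonoidHom U)
  simpa [trace_mapMatrix_mul_pow_eq_zero_iff hσ, -RingHom.mapMatrix_apply] using hsemi

theorem semilinear_setOf_trace_mul_pow_eq_zero {K : Type*} [Field K] [CharZero K]
    (C : Matrix m m K) (U : (Matrix m m K)ˣ) :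
    Semilinear {n : ℕ | (C * (U : Matrix m m K) ^ n).trace = 0} := by
  let entries (X : Matrix m m K) : Set K := Set.range fun q : m × m => X q.1 q.2
  let S : Set K := entries C ∪ entries U ∪ entries ↑U⁻¹
  let R := Algebra.adjoin ℤ S
  have : Algebra.FiniteType ℤ R := .adjoin_of_finite
    (((Set.finite_range _).union (Set.finite_range _)).union (Set.finite_range _))
  let ι : R →+* K := R.val
  have hι : Function.Injective ι := Subtype.val_injective
  have hlift (X : Matrix m m K) (hX : entries X ⊆ S) : ∃ Y, ι.mapMatrix Y = X :=
    ⟨.of fun i j => ⟨X i j, Algebra.subset_adjoin (hX ⟨(i, j), rfl⟩)⟩, rfl⟩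
  obtain ⟨C', hC⟩ := hlift C fun _ h => .inl (.inl h)
  obtain ⟨X, hX⟩ := hlift U fun _ h => .inl (.inr h)
  obtain ⟨Y, hY⟩ := hlift ↑U⁻¹ fun _ h => .inr h
  have hinj : Function.Injective (ι.mapMatrix (m := m)) := Matrix.map_injective hι
  have hXY : X * Y = 1 := hinj (by rw [map_mul, hX, hY, U.mul_inv, map_one])
  have hYX : Y * X = 1 := hinj (by rw [map_mul, hX, hY, U.inv_mul, map_one])
  simpa only [← hC, ← hX, trace_mapMatrix_mul_pow_eq_zero_iff hι] using
    semilinear_setOf_trace_mul_pow_eq_zero_of_finiteType C' ⟨X, Y, hXY, hYX⟩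

end Matrix

section Fitting

variable {K V : Type*} [Field K] [AddCommGroup V] [Module K V]

theorem exists_isUnit_restrict_range_pow_s2 [FiniteDimensional K V] (M : Module.End K V) :
    ∃ (e : ℕ) (h : ∀ v ∈ LinearMap.range (M ^ e), M v ∈ LinearMap.range (M ^ e)),
      IsUnit (M.restrict h) := by
  obtain ⟨e, he⟩ := (LinearMap.eventually_iInf_range_pow_eq M).exists_forall_of_atTop
  have hsucc : LinearMap.range (M ^ (e + 1)) = LinearMap.range (M ^ e) :=
    (he _ e.le_succ).symm.trans (he e le_rfl)
  have h : ∀ v ∈ LinearMap.range (M ^ e), M v ∈ LinearMap.range (M ^ e) := by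
    rintro _ ⟨v, rfl⟩
    exact ⟨M v, by rw [← Module.End.mul_apply, ← pow_succ, pow_succ', Module.End.mul_apply]⟩
  refine ⟨e, h, (LinearMap.isUnit_iff_range_eq_top _).2 (eq_top_iff.2 ?_)⟩
  rintro ⟨v, hv⟩ -
  obtain ⟨w, rfl⟩ : v ∈ LinearMap.range (M ^ (e + 1)) := hsucc ▸ hv
  refine ⟨⟨(M ^ e) w, w, rfl⟩, Subtype.ext ?_⟩
  exact (congr($(pow_succ' M e) w)).symm

theorem dual_apply_eq_trace_toMatrix_mul {ι : Type*} [Fintype ι] [DecidableEq ι]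
    (b : Module.Basis ι K V) (f : Module.Dual K V) (T : Module.End K V) (v : V) :
    f (T v) = (LinearMap.toMatrixAlgEquiv b (f.smulRight v) *
      LinearMap.toMatrixAlgEquiv b T).trace := by
  have : FiniteDimensional K V := .of_basis b
  rw [← map_mul]
  exact (LinearMap.trace_smulRight (f ∘ₗ T) v).symm.trans (LinearMap.trace_eq_matrix_trace K b _)

variable [FiniteDimensional K V]

theorem semilinear_setOf_dual_units_pow_apply_eq_zero [CharZero K] (f : Module.Dual K V)
    (U : (Module.End K V)ˣ) (v : V) : Semilinear {n : ℕ | f ((U ^ n : Module.End K V) v) = 0} := by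
  let b := Module.finBasis K V
  let Φ := LinearMap.toMatrixAlgEquiv b
  have hsemi := semilinear_setOf_trace_mul_pow_eq_zero (Φ (f.smulRight v))
    (Units.map Φ.toMonoidHom U)
  simpa [dual_apply_eq_trace_toMatrix_mul b f, Φ] using hsemi

end Fitting

theorem stmt_2_general {K V : Type*} [Field K] [CharZero K] [AddCommGroup V] [Module K V]
    [FiniteDimensional K V] (f : Module.Dual K V) (M : Module.End K V) (v : V) :
    Semilinear {n : ℕ | f ((M ^ n) v) = 0} := by
  obtain ⟨e, h, U, hU⟩ := exists_isUnit_restrict_range_pow_s2 M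
  refine .of_preimage_add_right e ?_
  convert! semilinear_setOf_dual_units_pow_apply_eq_zero (f ∘ₗ Submodule.subtype _) U
    ⟨(M ^ e) v, v, rfl⟩ using 3 with n
  rw [hU, Module.End.pow_restrict]
  simp [pow_add]

/-- For a linear map `M` on a finite-dimensional complex inner product space
and vectors `φ, ψ`, the set `{n | ⟨φ, M^n ψ⟩ = 0}` is semilinear. -/
theorem stmt_2 {V : Type*} [NormedAddCommGroup V] [InnerProductSpace ℂ V]
    [FiniteDimensional ℂ V]
    (M : V →ₗ[ℂ] V) (φ ψ : V) :
    Semilinear {n : ℕ | ⟪φ, (M ^ n) ψ⟫_ℂ = 0} :=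
  stmt_2_general (innerₛₗ ℂ φ) M ψ
end

section
/- Let U be a unitary operator on a finite-dimensional complex inner product space H, and let p ≥ 1 be an integer such that for all eigenvalues λ, μ of U, if λ/μ is a root of unity then (λ/μ)^p = 1. Then for every integer n ≥ 1, every eigenvector of U^n is also an eigenvector of U^p; i.e., if v ≠ 0 and U^n v = c v for some complex c, then there exists a complex number c' with U^p v = c' v. -/
open scoped InnerProductSpace

/-!
If `f` is injective, every eigenvalue `c` of `f ^ n` is nonzero. The polynomial `X ^ n - c` then has
distinct roots, so `ker (f ^ n - c)` is the sum of the eigenspaces of `f` at the `n`-th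
roots of `c`. The quotient of two eigenvalues of `f` among these roots is a root of unity, so by
hypothesis they share the same `p`-th power `d`, and `f ^ p` acts on the whole sum as `d`.
-/

open Polynomial Module.End

section CommRing

variable {R M : Type*} [CommRing R] [AddCommGroup M] [Module R M]

theorem ker_aeval_prod_eq_iSup_of_pairwise_isCoprime {ι : Type*} (f : Module.End R M)
    {s : Finset ι} {q : ι → R[X]} (hq : (s : Set ι).Pairwise fun i j ↦ IsCoprime (q i) (q j)) :
    LinearMap.ker (aeval f (∏ i ∈ s, q i)) = ⨆ i ∈ s, LinearMap.ker (aeval f (q i)) := by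
  classical
  induction s using Finset.induction_on with
  | empty => simp [Module.End.one_eq_id]
  | insert i s hi ih =>
    have hcoprime : IsCoprime (q i) (∏ j ∈ s, q j) := IsCoprime.prod_right fun j hj ↦
      hq (Finset.mem_insert_self i s) (Finset.mem_insert_of_mem hj)
        (ne_of_mem_of_not_mem hj hi).symm
    rw [Finset.prod_insert hi, ← sup_ker_aeval_eq_ker_aeval_mul_of_coprime f hcoprime,
      ih (hq.mono (Finset.coe_subset.mpr (Finset.subset_insert i s))), Finset.iSup_insert]

theorem ne_zero_of_hasEigenvector_of_injective {f : Module.End R M}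
    (hf : Function.Injective f) {c : R} {v : M} (hv : f.HasEigenvector c v) : c ≠ 0 := by
  rintro rfl
  exact hv.2 (hf (by rw [hv.apply_eq_smul, zero_smul, map_zero]))

end CommRing

section Field

variable {K V : Type*} [Field K] [AddCommGroup V] [Module K V]

theorem ker_aeval_eq_iSup_eigenspace (f : Module.End K V) {q : K[X]} (hsplits : q.Splits)
    (hsep : q.Separable) :
    LinearMap.ker (aeval f q) = ⨆ (μ : K) (_ : q.IsRoot μ), f.eigenspace μ := by
  classical
  have hfactor : q = q.leadingCoeff • ∏ μ ∈ q.roots.toFinset, (X - C μ) := by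
    rw [Finset.prod_eq_multiset_prod, Multiset.toFinset_val, (nodup_roots hsep).dedup,
      smul_eq_C_mul]
    exact hsplits.eq_prod_roots
  have hlead : q.leadingCoeff ≠ 0 := leadingCoeff_ne_zero.mpr hsep.ne_zero
  have hlinear (μ : K) : LinearMap.ker (aeval f (X - C μ)) = f.eigenspace μ := by
    rw [eigenspace_def, map_sub, aeval_X, aeval_C, Algebra.algebraMap_eq_smul_one]
  have hcoprime := (pairwise_coprime_X_sub_C (Function.injective_id (α := K))).set_pairwise
    (q.roots.toFinset : Set K)
  calc LinearMap.ker (aeval f q)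
      = LinearMap.ker (aeval f (∏ μ ∈ q.roots.toFinset, (X - C μ))) := by
        conv_lhs => rw [hfactor, map_smul, LinearMap.ker_smul _ _ hlead]
    _ = ⨆ μ ∈ q.roots.toFinset, LinearMap.ker (aeval f (X - C μ)) :=
        ker_aeval_prod_eq_iSup_of_pairwise_isCoprime f hcoprime
    _ = ⨆ (μ : K) (_ : q.IsRoot μ), f.eigenspace μ := by
        simp only [hlinear, Multiset.mem_toFinset, mem_roots hsep.ne_zero]

theorem eigenspace_pow_eq_iSup_eigenspace (f : Module.End K V) {n : ℕ} (hn : (n : K) ≠ 0)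
    {c : K} (hc : c ≠ 0) (hsplits : (X ^ n - C c).Splits) :
    (f ^ n).eigenspace c = ⨆ (μ : K) (_ : μ ^ n = c), f.eigenspace μ := by
  have hker := ker_aeval_eq_iSup_eigenspace f hsplits (separable_X_pow_sub_C c hn hc)
  simpa only [map_sub, map_pow, aeval_X, aeval_C, Algebra.algebraMap_eq_smul_one, ← eigenspace_def,
    IsRoot.def, eval_sub, eval_pow, eval_X, eval_C, sub_eq_zero] using hker

variable {f : Module.End K V}

theorem eigenspace_pow_le_eigenspace_pow {n p : ℕ} (hn : (n : K) ≠ 0) {c d : K} (hc : c ≠ 0)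
    (hsplits : (X ^ n - C c).Splits) (hd : ∀ μ, f.HasEigenvalue μ → μ ^ n = c → μ ^ p = d) :
    (f ^ n).eigenspace c ≤ (f ^ p).eigenspace d := by
  rw [eigenspace_pow_eq_iSup_eigenspace f hn hc hsplits]
  refine iSup₂_le fun μ hμ v hv ↦ ?_
  rcases eq_or_ne v 0 with rfl | hv0
  · exact zero_mem _
  · have hvec : f.HasEigenvector μ v := ⟨hv, hv0⟩
    rw [mem_eigenspace_iff, hvec.pow_apply, hd μ (hasEigenvalue_of_hasEigenvector hvec) hμ]

theorem exists_forall_hasEigenvalue_pow_eq {p : ℕ}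
    (hP : ∀ lam mu : K, f.HasEigenvalue lam → f.HasEigenvalue mu →
      (∃ m : ℕ, 1 ≤ m ∧ (lam / mu) ^ m = 1) → (lam / mu) ^ p = 1)
    {n : ℕ} (hn : n ≠ 0) {c : K} (hc : c ≠ 0) :
    ∃ d, ∀ μ, f.HasEigenvalue μ → μ ^ n = c → μ ^ p = d := by
  by_cases! hroot : ∃ μ, f.HasEigenvalue μ ∧ μ ^ n = c
  · obtain ⟨μ, hμ, hμc⟩ := hroot
    refine ⟨μ ^ p, fun ν hν hνc ↦ ?_⟩
    have hμ0 : μ ≠ 0 := ne_zero_pow hn (hμc ▸ hc)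
    have hquot : (ν / μ) ^ n = 1 := by rw [div_pow, hνc, hμc, div_self hc]
    have hpow := hP ν μ hν hμ ⟨n, Nat.one_le_iff_ne_zero.mpr hn, hquot⟩
    rwa [div_pow, div_eq_one_iff_eq (pow_ne_zero p hμ0)] at hpow
  · exact ⟨0, fun μ hμ hμc ↦ absurd hμc (hroot μ hμ)⟩

theorem stmt_8_general (hf : Function.Injective f) {p : ℕ}
    (hP : ∀ lam mu : K, f.HasEigenvalue lam → f.HasEigenvalue mu →
      (∃ m : ℕ, 1 ≤ m ∧ (lam / mu) ^ m = 1) → (lam / mu) ^ p = 1)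
    {n : ℕ} (hn : (n : K) ≠ 0) {c : K} (hsplits : (X ^ n - C c).Splits) {v : V}
    (hv : (f ^ n).HasEigenvector c v) : ∃ c', (f ^ p).HasEigenvector c' v := by
  have hinj : Function.Injective (f ^ n) := by
    rw [Module.End.coe_pow]
    exact hf.iterate n
  have hc : c ≠ 0 := ne_zero_of_hasEigenvector_of_injective hinj hv
  have hn0 : n ≠ 0 := fun h ↦ hn (by rw [h, Nat.cast_zero])
  obtain ⟨d, hd⟩ := exists_forall_hasEigenvalue_pow_eq hP hn0 hc
  exact ⟨d, eigenspace_pow_le_eigenspace_pow hn hc hsplits hd hv.1, hv.2⟩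

end Field

/-- Let `U` be a unitary operator on a finite-dimensional complex inner
product space and `p ≥ 1` be such that for all eigenvalues `λ, μ` of `U`, if `λ/μ` is a root
of unity then `(λ/μ)^p = 1`. Then for every `n ≥ 1`, every eigenvector of `U^n` is an
eigenvector of `U^p`. -/
theorem stmt_8 {H : Type*} [NormedAddCommGroup H] [InnerProductSpace ℂ H]
    [FiniteDimensional ℂ H]
    (U : H →ₗ[ℂ] H) (hU : ∀ x y : H, ⟪U x, U y⟫_ℂ = ⟪x, y⟫_ℂ)
    (p : ℕ) (hp : 1 ≤ p)
    (hP : ∀ lam mu : ℂ, Module.End.HasEigenvalue U lam →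
      Module.End.HasEigenvalue U mu →
      (∃ m : ℕ, 1 ≤ m ∧ (lam / mu) ^ m = 1) → (lam / mu) ^ p = 1) :
    ∀ n : ℕ, 1 ≤ n → ∀ v : H, v ≠ 0 → ∀ c : ℂ, (U ^ n) v = c • v →
      ∃ c' : ℂ, (U ^ p) v = c' • v := by
  intro n hn v hv c hvc
  obtain ⟨c', hc'⟩ := stmt_8_general (U.isometryOfInner hU).injective hP
    (Nat.cast_ne_zero.mpr (Nat.one_le_iff_ne_zero.mp hn)) (IsAlgClosed.splits _)
    ⟨mem_eigenspace_iff.mpr hvc, hv⟩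
  exact ⟨c', hc'.apply_eq_smul⟩
end

section
/- Let U be a unitary operator on a finite-dimensional complex inner product space H, and let p ≥ 1 be an integer such that for all eigenvalues λ, μ of U, if λ/μ is a root of unity then (λ/μ)^p = 1. Then for every linear subspace K of H: if U^n K = K for some integer n ≥ 1, then U^p K = K. -/
open scoped InnerProductSpace

/-! Since `U` is diagonalizable, a subspace `K` invariant under `U ^ n` is the sum of its
intersections with the eigenspaces of `U ^ n`. The eigenspace of `U ^ n` for `μ` is the sum of the
eigenspaces of `U` for the `n`-th roots `a` of `μ`. For `μ ≠ 0` the ratio of two such eigenvalues is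
a root of unity, so they share the same power `a ^ p`. Thus `U ^ p` acts on that eigenspace as a
scalar, which vanishes exactly when `μ` does. Hence `U ^ p` and `U ^ n` map each
piece of `K` onto the same subspace. -/

section Powers

variable {R M : Type*} [CommRing R] [AddCommGroup M] [Module R M]

theorem eigenspace_le_eigenspace_pow (f : Module.End R M) (a : R) (n : ℕ) :
    f.eigenspace a ≤ (f ^ n).eigenspace (a ^ n) := by
  intro x hx
  rw [Module.End.mem_eigenspace_iff] at hx ⊢
  induction n with
  | zero => simp
  | succ n ih => rw [pow_succ, Module.End.mul_apply, hx, map_smul, ih, smul_smul, pow_succ']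

theorem iSup_eigenspace_pow_eq_top {f : Module.End R M} (hf : ⨆ a, f.eigenspace a = ⊤)
    (n : ℕ) : ⨆ μ, (f ^ n).eigenspace μ = ⊤ :=
  top_le_iff.mp <| hf ▸ iSup_le fun a =>
    (eigenspace_le_eigenspace_pow f a n).trans (le_iSup (f ^ n).eigenspace (a ^ n))

end Powers

section Diagonalizable

variable {F V : Type*} [Field F] [AddCommGroup V] [Module F V]

theorem map_eq_self_of_le_eigenspace {f : Module.End F V} {a : F} {W : Submodule F V}
    (hW : W ≤ f.eigenspace a) (ha : a ≠ 0) : W.map f = W := by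
  refine le_antisymm (Submodule.map_le_iff_le_comap.mpr fun x hx => ?_) fun x hx => ?_
  · rw [Submodule.mem_comap, Module.End.mem_eigenspace_iff.mp (hW hx)]
    exact W.smul_mem a hx
  · refine ⟨a⁻¹ • x, W.smul_mem a⁻¹ hx, ?_⟩
    rw [map_smul, Module.End.mem_eigenspace_iff.mp (hW hx), inv_smul_smul₀ ha]

theorem map_eq_map_of_le_eigenspace {f g : Module.End F V} {a b : F} {W : Submodule F V}
    (hf : W ≤ f.eigenspace a) (hg : W ≤ g.eigenspace b) (hab : a = 0 ↔ b = 0) :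
    W.map f = W.map g := by
  by_cases ha : a = 0
  · rw [ha, Module.End.eigenspace_zero, LinearMap.le_ker_iff_map] at hf
    rw [hab.mp ha, Module.End.eigenspace_zero, LinearMap.le_ker_iff_map] at hg
    rw [hf, hg]
  · rw [map_eq_self_of_le_eigenspace hf ha, map_eq_self_of_le_eigenspace hg (mt hab.mpr ha)]

/-- A counterpart of `Submodule.eq_iSup_inf_genEigenspace` in arbitrary dimension. -/
theorem eq_iSup_inf_eigenspace {f : Module.End F V} (hf : ⨆ a, f.eigenspace a = ⊤)
    {K : Submodule F V} (hK : K ∈ f.invtSubmodule) : K = ⨆ a, K ⊓ f.eigenspace a := by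
  classical
  refine le_antisymm (fun x hx => ?_) (iSup_le fun _ => inf_le_left)
  obtain ⟨v, hv, rfl⟩ :=
    (Submodule.mem_iSup_iff_exists_finsupp _ x).mp (hf ▸ Submodule.mem_top)
  refine Submodule.sum_mem _ fun b hb =>
    Submodule.mem_iSup_of_mem b (Submodule.mem_inf.mpr ⟨?_, hv b⟩)
  -- The Lagrange polynomial vanishing at the other eigenvalues projects onto the `b`-component.
  let q := Lagrange.basis v.support id b
  have haeval : ∀ a ∈ v.support, Polynomial.aeval f q (v a) = q.eval a • v a := fun a ha =>
    Module.End.aeval_apply_of_hasEigenvector ⟨hv a, Finsupp.mem_support_iff.mp ha⟩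
  have hproj : Polynomial.aeval f q (∑ a ∈ v.support, v a) = v b := by
    rw [map_sum, Finset.sum_congr rfl haeval, Finset.sum_eq_single_of_mem b hb]
    · have hqb : q.eval b = 1 := Lagrange.eval_basis_self Function.injective_id.injOn hb
      rw [hqb, one_smul]
    · intro a ha hab
      have hqa : q.eval a = 0 := Lagrange.eval_basis_of_ne (v := id) hab.symm ha
      rw [hqa, zero_smul]
  rw [← hproj]
  exact Polynomial.aeval_apply_smul_mem_of_le_comap hx q f hK

variable {f : Module.End F V}

theorem eigenspace_pow_le_eigenspace_pow_s9 (hf : ⨆ a, f.eigenspace a = ⊤) {n p : ℕ} {μ ν : F}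
    (h : ∀ a, f.HasEigenvalue a → a ^ n = μ → a ^ p = ν) :
    (f ^ n).eigenspace μ ≤ (f ^ p).eigenspace ν := by
  have hinv : (f ^ n).eigenspace μ ∈ f.invtSubmodule :=
    Module.End.mapsTo_genEigenspace_of_comm (Commute.pow_self f n) μ 1
  rw [eq_iSup_inf_eigenspace hf hinv]
  refine iSup_le fun a x ⟨hxμ, hxa⟩ => ?_
  obtain rfl | hx := eq_or_ne x 0
  · exact zero_mem _
  have ha : f.HasEigenvector a x := ⟨hxa, hx⟩
  have haμ : a ^ n = μ := smul_left_injective F hx <|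
    (ha.pow_apply n).symm.trans (Module.End.mem_eigenspace_iff.mp hxμ)
  rw [← h a (Module.End.hasEigenvalue_of_hasEigenvector ha) haμ]
  exact eigenspace_le_eigenspace_pow f a p hxa

theorem map_pow_eq_map_pow (hf : ⨆ a, f.eigenspace a = ⊤) {n p : ℕ} (hn : n ≠ 0) (hp : p ≠ 0)
    (h : ∀ a b, f.HasEigenvalue a → f.HasEigenvalue b → a ^ n = b ^ n → a ^ p = b ^ p)
    {K : Submodule F V} (hK : K ∈ (f ^ n).invtSubmodule) :
    K.map (f ^ p) = K.map (f ^ n) := by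
  have hscalar (μ : F) :
      ∃ ν, (ν = 0 ↔ μ = 0) ∧ ∀ a, f.HasEigenvalue a → a ^ n = μ → a ^ p = ν := by
    by_cases hμ : ∃ b, f.HasEigenvalue b ∧ b ^ n = μ
    · obtain ⟨b, hb, rfl⟩ := hμ
      exact ⟨b ^ p, by rw [pow_eq_zero_iff hp, pow_eq_zero_iff hn], fun a ha => h a b ha hb⟩
    · exact ⟨μ, Iff.rfl, fun a ha haμ => (hμ ⟨a, ha, haμ⟩).elim⟩
  rw [eq_iSup_inf_eigenspace (iSup_eigenspace_pow_eq_top hf n) hK, Submodule.map_iSup,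
    Submodule.map_iSup]
  refine iSup_congr fun μ => ?_
  obtain ⟨ν, hνμ, hν⟩ := hscalar μ
  exact map_eq_map_of_le_eigenspace
    (inf_le_right.trans (eigenspace_pow_le_eigenspace_pow_s9 hf hν)) inf_le_right hνμ

end Diagonalizable

theorem isSemisimple_linearIsometry {𝕜 E : Type*} [RCLike 𝕜] [NormedAddCommGroup E]
    [InnerProductSpace 𝕜 E] [FiniteDimensional 𝕜 E] (U : E →ₗᵢ[𝕜] E) :
    Module.End.IsSemisimple U.toLinearMap := by
  refine Module.End.isSemisimple_iff.mpr fun K hK => ⟨Kᗮ, ?_, K.isCompl_orthogonal⟩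
  have hmap : K.map U.toLinearMap = K :=
    Submodule.eq_of_le_of_finrank_eq (Submodule.map_le_iff_le_comap.mpr hK)
      (K.equivMapOfInjective U.toLinearMap U.injective).symm.finrank_eq
  rw [Module.End.mem_invtSubmodule_iff_map_le, K.map_orthogonal U, hmap]
  exact inf_le_left

theorem stmt_9_general {F V : Type*} [Field F] [AddCommGroup V] [Module F V]
    {f : Module.End F V} (hf : ⨆ a, f.eigenspace a = ⊤) {p : ℕ}
    (hP : ∀ a b, f.HasEigenvalue a → f.HasEigenvalue b →
      (∃ m : ℕ, 1 ≤ m ∧ (a / b) ^ m = 1) → (a / b) ^ p = 1)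
    {K : Submodule F V} (hK : ∃ n : ℕ, 1 ≤ n ∧ K.map (f ^ n) = K) :
    K.map (f ^ p) = K := by
  obtain ⟨n, hn, hKn⟩ := hK
  have hn0 : n ≠ 0 := Nat.one_le_iff_ne_zero.mp hn
  obtain rfl | hp := eq_or_ne p 0
  · exact Submodule.map_id K
  have hpow (a b : F) (ha : f.HasEigenvalue a) (hb : f.HasEigenvalue b) (hab : a ^ n = b ^ n) :
      a ^ p = b ^ p := by
    obtain rfl | hb0 := eq_or_ne b 0
    · rw [zero_pow hn0, pow_eq_zero_iff hn0] at hab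
      rw [hab]
    · rw [← div_eq_one_iff_eq (pow_ne_zero _ hb0), ← div_pow] at hab ⊢
      exact hP a b ha hb ⟨n, hn, hab⟩
  exact (map_pow_eq_map_pow hf hn0 hp hpow
    ((f ^ n).mem_invtSubmodule_iff_map_le.mpr hKn.le)).trans hKn

/-- Let `U` be a unitary operator on a finite-dimensional complex inner
product space and `p ≥ 1` be such that for all eigenvalues `λ, μ` of `U`, if `λ/μ` is a root
of unity then `(λ/μ)^p = 1`. Then for every subspace `K`: if `U^n K = K` for some `n ≥ 1`,
then `U^p K = K`. -/
theorem stmt_9 {H : Type*} [NormedAddCommGroup H] [InnerProductSpace ℂ H]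
    [FiniteDimensional ℂ H]
    (U : H →ₗ[ℂ] H) (hU : ∀ x y : H, ⟪U x, U y⟫_ℂ = ⟪x, y⟫_ℂ)
    (p : ℕ) (hp : 1 ≤ p)
    (hP : ∀ lam mu : ℂ, Module.End.HasEigenvalue U lam →
      Module.End.HasEigenvalue U mu →
      (∃ m : ℕ, 1 ≤ m ∧ (lam / mu) ^ m = 1) → (lam / mu) ^ p = 1) :
    ∀ K : Submodule ℂ H, (∃ n : ℕ, 1 ≤ n ∧ Submodule.map (U ^ n) K = K) →
      Submodule.map (U ^ p) K = K := by
  have hdiag : ⨆ a, Module.End.eigenspace U a = ⊤ :=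
    (isSemisimple_linearIsometry (LinearMap.isometryOfInner U hU)).iSup_eigenspace_eq_top
  exact fun _ hK => stmt_9_general hdiag hP hK
end

section
/- Let U be a unitary operator on a finite-dimensional complex inner product space H, K a linear subspace of H, and let p ≥ 1 satisfy: for all eigenvalues λ, μ of U, if λ/μ is a root of unity then (λ/μ)^p = 1. For q ≥ 1 let K_q = {ψ ∈ H | U^{n q} ψ ∈ K for all n ≥ 0}. Then for every integer a ≥ 1, K_a ⊆ K_p. -/
open scoped InnerProductSpace

/-!
If `λ ^ a = μ ^ a` for eigenvalues `λ, μ` of `U`, then `λ / μ` is a root of unity, so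
`λ ^ p = μ ^ p`. Hence `μ ↦ μ ^ (n * p)` factors through `μ ↦ μ ^ a`, and since `ψ` is a finite sum
of eigenvectors, Lagrange interpolation gives a polynomial `f` with
`f (U ^ a) ψ = U ^ (n * p) ψ`. A subspace containing the orbit of `ψ` under `U ^ a` contains
`f (U ^ a) ψ`.
-/

open Polynomial Module.End

lemma pow_eq_pow_of_div_pow_eq_one {G₀ : Type*} [CommGroupWithZero G₀] {x y : G₀} {a p : ℕ}
    (ha : a ≠ 0) (hxy : x ^ a = y ^ a) (h : (x / y) ^ a = 1 → (x / y) ^ p = 1) :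
    x ^ p = y ^ p := by
  obtain rfl | hy := eq_or_ne y 0
  · rw [zero_pow ha] at hxy
    rw [eq_zero_of_pow_eq_zero hxy]
  · simpa only [div_pow, div_eq_one_iff_eq (pow_ne_zero _ hy), hxy, true_imp_iff] using h

lemma exists_polynomial_eval_eq_of_factorsThrough {ι F : Type*} [Field F] {v r : ι → F}
    (hv : (Set.range v).Finite) (hr : r.FactorsThrough v) :
    ∃ f : F[X], ∀ i, f.eval (v i) = r i := by
  classical
  refine ⟨Lagrange.interpolate hv.toFinset id (Function.extend v r 0), fun i => ?_⟩
  have hvi : v i ∈ hv.toFinset := hv.mem_toFinset.mpr (Set.mem_range_self i)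
  calc _ = Function.extend v r 0 (v i) :=
        Lagrange.eval_interpolate_at_node _ Function.injective_id.injOn hvi
    _ = r i := hr.extend_apply 0 i

lemma aeval_apply_mem_of_forall_pow_apply_mem {R M : Type*} [CommSemiring R] [AddCommMonoid M]
    [Module R M] {T : Module.End R M} {K : Submodule R M} {x : M}
    (hx : ∀ n : ℕ, (T ^ n) x ∈ K) (f : R[X]) : aeval T f x ∈ K := by
  rw [aeval_eq_sum_range, LinearMap.sum_apply]
  exact K.sum_mem fun n _ => K.smul_mem _ (hx n)

lemma exists_aeval_pow_apply_eq_pow_apply {F V : Type*} [Field F] [AddCommGroup V] [Module F V]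
    {U : Module.End F V} {a p : ℕ}
    (h : ∀ μ ν, U.HasEigenvalue μ → U.HasEigenvalue ν → μ ^ a = ν ^ a → μ ^ p = ν ^ p)
    {x : V} (hx : x ∈ ⨆ μ, U.eigenspace μ) :
    ∃ f : F[X], aeval (U ^ a) f x = (U ^ p) x := by
  obtain ⟨c, hc, rfl⟩ := (Submodule.mem_iSup_iff_exists_finsupp _ _).mp hx
  have hvec (μ : c.support) : U.HasEigenvector μ (c μ) :=
    ⟨hc μ, Finsupp.mem_support_iff.mp μ.2⟩
  have hval (μ : c.support) : U.HasEigenvalue μ := hasEigenvalue_of_hasEigenvector (hvec μ)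
  obtain ⟨f, hf⟩ := exists_polynomial_eval_eq_of_factorsThrough
    (v := fun μ : c.support => (μ : F) ^ a) (r := fun μ => (μ : F) ^ p) (Set.finite_range _)
    fun μ ν hμν => h μ ν (hval μ) (hval ν) hμν
  refine ⟨f, ?_⟩
  simp only [Finsupp.sum, map_sum]
  refine Finset.sum_congr rfl fun μ hμ => ?_
  calc aeval (U ^ a) f (c μ) = f.eval (μ ^ a) • c μ :=
        aeval_apply_of_mem_apply_eq_smul ((hvec ⟨μ, hμ⟩).pow_apply a)
    _ = μ ^ p • c μ := by rw [hf ⟨μ, hμ⟩]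
    _ = (U ^ p) (c μ) := ((hvec ⟨μ, hμ⟩).pow_apply p).symm

section InnerProductSpace

variable {𝕜 H : Type*} [RCLike 𝕜] [NormedAddCommGroup H] [InnerProductSpace 𝕜 H]

lemma orthogonal_mem_invtSubmodule_of_linearIsometry (U : H →ₗᵢ[𝕜] H) {V : Submodule 𝕜 H}
    [FiniteDimensional 𝕜 V] (hV : V ∈ invtSubmodule U.toLinearMap) :
    Vᗮ ∈ invtSubmodule U.toLinearMap := by
  have hmap : V.map U.toLinearMap = V :=
    Submodule.eq_of_le_of_finrank_eq ((mem_invtSubmodule_iff_map_le _).mp hV)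
      (V.equivMapOfInjective U.toLinearMap U.injective).finrank_eq.symm
  rw [mem_invtSubmodule_iff_map_le]
  calc Vᗮ.map U.toLinearMap ≤ (V.map U.toLinearMap)ᗮ := (V.map_orthogonal U).trans_le inf_le_left
    _ = Vᗮ := by rw [hmap]

lemma isSemisimple_of_linearIsometry [FiniteDimensional 𝕜 H] (U : H →ₗᵢ[𝕜] H) :
    IsSemisimple U.toLinearMap :=
  isSemisimple_iff.mpr fun V hV =>
    ⟨Vᗮ, orthogonal_mem_invtSubmodule_of_linearIsometry U hV, V.isCompl_orthogonal⟩

end InnerProductSpace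

/-- An eigenvalue `mu = 0` is harmless in `hP`: Lean's `lam / 0 = 0` is not a root of unity. -/
theorem stmt_12_general {F V : Type*} [Field F] [AddCommGroup V] [Module F V]
    (U : Module.End F V) (hU : ⨆ μ, U.eigenspace μ = ⊤) (K : Submodule F V) (p : ℕ)
    (hP : ∀ lam mu : F, U.HasEigenvalue lam → U.HasEigenvalue mu →
      (∃ m : ℕ, 1 ≤ m ∧ (lam / mu) ^ m = 1) → (lam / mu) ^ p = 1) :
    ∀ a : ℕ, 1 ≤ a →
      {ψ : V | ∀ n : ℕ, (U ^ (n * a)) ψ ∈ K} ⊆ {ψ : V | ∀ n : ℕ, (U ^ (n * p)) ψ ∈ K} := by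
  intro a ha ψ hψ n
  have hpow : ∀ μ ν, U.HasEigenvalue μ → U.HasEigenvalue ν → μ ^ a = ν ^ a →
      μ ^ (n * p) = ν ^ (n * p) := fun μ ν hμ hν h => by
    have hp : μ ^ p = ν ^ p := pow_eq_pow_of_div_pow_eq_one (Nat.ne_zero_of_lt ha) h
      fun hroot => hP μ ν hμ hν ⟨a, ha, hroot⟩
    rw [pow_mul', hp, pow_mul']
  obtain ⟨f, hf⟩ := exists_aeval_pow_apply_eq_pow_apply hpow (hU ▸ Submodule.mem_top : ψ ∈ _)
  rw [← hf]
  refine aeval_apply_mem_of_forall_pow_apply_mem (fun m => ?_) f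
  rw [← pow_mul']
  exact hψ m

/-- Let `U` be a unitary operator on a finite-dimensional complex inner
product space, `K` a subspace, and `p ≥ 1` such that for all eigenvalues `λ, μ` of `U`, if
`λ/μ` is a root of unity then `(λ/μ)^p = 1`. With `K_q = {ψ | U^{n q} ψ ∈ K for all n ≥ 0}`,
we have `K_a ⊆ K_p` for every `a ≥ 1`. -/
theorem stmt_12 {H : Type*} [NormedAddCommGroup H] [InnerProductSpace ℂ H]
    [FiniteDimensional ℂ H]
    (U : H →ₗ[ℂ] H) (hU : ∀ x y : H, ⟪U x, U y⟫_ℂ = ⟪x, y⟫_ℂ)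
    (K : Submodule ℂ H)
    (p : ℕ) (hp : 1 ≤ p)
    (hP : ∀ lam mu : ℂ, Module.End.HasEigenvalue U lam →
      Module.End.HasEigenvalue U mu →
      (∃ m : ℕ, 1 ≤ m ∧ (lam / mu) ^ m = 1) → (lam / mu) ^ p = 1) :
    ∀ a : ℕ, 1 ≤ a →
      {ψ : H | ∀ n : ℕ, (U ^ (n * a)) ψ ∈ K} ⊆ {ψ : H | ∀ n : ℕ, (U ^ (n * p)) ψ ∈ K} :=
  stmt_12_general U (isSemisimple_of_linearIsometry
    (LinearMap.isometryOfInner U hU)).iSup_eigenspace_eq_top K p hP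
end

section
/- Let N ≥ 2, let x ∈ {0, 1, …, N−1}, let ψ₀ = (1/√N) Σ_{k=0}^{N−1} e_k be the uniform superposition in ℂ^N (with standard orthonormal basis e_0, …, e_{N−1}), and let G = (2|ψ₀⟩⟨ψ₀| − I)(2|e_x⟩⟨e_x| − I) be the product of the reflection about ψ₀ with the reflection about e_x. Then the characteristic polynomial of G equals (λ − 1)^{N−2} (λ² + 2(1 − 2/N)λ + 1). -/
open Polynomial Matrix

/-!
The product of two reflections differs from the identity by a matrix of rank at most two. Writing
that matrix as `A * B` with `A` of size `N × 2` and `B` of size `2 × N`, the exchange of `A * B` and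
`B * A` reduces the characteristic polynomial to that of a `2 × 2` matrix of pairings, at the cost
of the factor `(X - 1) ^ (N - 2)`. The quadratic factor has constant term `1`, and its linear
coefficient depends only on the overlap `|⟨ψ₀, e_x⟩|² = 1 / N`.
-/

section RankTwo

variable {R m n : Type*} [CommRing R] [Fintype m] [DecidableEq m] [Fintype n] [DecidableEq n]

theorem charpoly_add_scalar (M : Matrix n n R) (μ : R) :
    (M + scalar n μ).charpoly = M.charpoly.comp (X - C μ) := by
  simpa only [map_neg, sub_neg_eq_add, ← sub_eq_add_neg] using charpoly_sub_scalar M (-μ)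

theorem charpoly_mul_add_scalar_comm_of_le (A : Matrix m n R) (B : Matrix n m R) (μ : R)
    (hle : Fintype.card n ≤ Fintype.card m) :
    (A * B + scalar m μ).charpoly =
      (X - C μ) ^ (Fintype.card m - Fintype.card n) * (B * A + scalar n μ).charpoly := by
  simp only [charpoly_add_scalar, charpoly_mul_comm_of_le A B hle, mul_comp, X_pow_comp]

theorem charpoly_vecMulVec_add_vecMulVec_add_scalar (hn : 2 ≤ Fintype.card n)
    (a b c d : n → R) (μ : R) :
    (vecMulVec a b + vecMulVec c d + scalar n μ).charpoly =
      (X - C μ) ^ (Fintype.card n - 2) *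
        ((X - C (b ⬝ᵥ a + μ)) * (X - C (d ⬝ᵥ c + μ)) - C ((b ⬝ᵥ c) * (d ⬝ᵥ a))) := by
  nontriviality R
  let A : Matrix n (Fin 2) R := (of ![a, c])ᵀ
  let B : Matrix (Fin 2) n R := of ![b, d]
  have hAB : vecMulVec a b + vecMulVec c d = A * B := by
    ext i j
    simp [A, B, mul_apply, vecMulVec_apply]
  have hBA : B * A + scalar (Fin 2) μ = !![b ⬝ᵥ a + μ, b ⬝ᵥ c; d ⬝ᵥ a, d ⬝ᵥ c + μ] := by
    ext i j
    fin_cases i <;> fin_cases j <;> simp [A, B, -cons_mul, mul_apply, dotProduct]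
  rw [hAB, charpoly_mul_add_scalar_comm_of_le A B μ (by simpa using hn), hBA, charpoly_fin_two,
    trace_fin_two_of, det_fin_two_of, Fintype.card_fin]
  simp only [map_add, map_sub, map_mul]
  ring

end RankTwo

section Reflections

variable {R n : Type*} [CommRing R] [Fintype n] [DecidableEq n]

theorem one_sub_vecMulVec_mul_one_sub_vecMulVec (u u' v v' : n → R) :
    (1 - vecMulVec u u') * (1 - vecMulVec v v') =
      vecMulVec u ((u' ⬝ᵥ v) • v' - u') + vecMulVec (-v) v' + 1 := by
  simp only [sub_mul, mul_sub, one_mul, mul_one, vecMulVec_mul_vecMulVec, vecMulVec_sub,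
    neg_vecMulVec]
  abel

theorem charpoly_one_sub_vecMulVec_mul_one_sub_vecMulVec (hn : 2 ≤ Fintype.card n)
    (u u' v v' : n → R) :
    ((1 - vecMulVec u u') * (1 - vecMulVec v v')).charpoly =
      (X - 1) ^ (Fintype.card n - 2) *
        (X ^ 2 - C (2 - u' ⬝ᵥ u - v' ⬝ᵥ v + (u' ⬝ᵥ v) * (v' ⬝ᵥ u)) * X +
          C ((1 - u' ⬝ᵥ u) * (1 - v' ⬝ᵥ v))) := by
  rw [one_sub_vecMulVec_mul_one_sub_vecMulVec, ← map_one (scalar n),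
    charpoly_vecMulVec_add_vecMulVec_add_scalar hn]
  simp only [sub_dotProduct, smul_dotProduct, dotProduct_neg, smul_eq_mul, map_add, map_sub,
    map_mul, map_neg, map_one, map_ofNat]
  ring

theorem charpoly_reflection_mul_reflection (hn : 2 ≤ Fintype.card n) {u u' v v' : n → R}
    (hu : u' ⬝ᵥ u = 1) (hv : v' ⬝ᵥ v = 1) :
    ((2 • vecMulVec u u' - 1) * (2 • vecMulVec v v' - 1)).charpoly =
      (X - 1) ^ (Fintype.card n - 2) *
        (X ^ 2 + C (2 * (1 - 2 * ((u' ⬝ᵥ v) * (v' ⬝ᵥ u)))) * X + 1) := by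
  have hneg : (2 • vecMulVec u u' - 1) * (2 • vecMulVec v v' - 1) =
      (1 - vecMulVec ((2 : R) • u) u') * (1 - vecMulVec ((2 : R) • v) v') := by
    rw [smul_vecMulVec, smul_vecMulVec, ofNat_smul_eq_nsmul R, ofNat_smul_eq_nsmul R,
      ← neg_sub 1, ← neg_sub 1, neg_mul_neg]
  rw [hneg, charpoly_one_sub_vecMulVec_mul_one_sub_vecMulVec hn]
  simp only [dotProduct_smul, hu, hv, smul_eq_mul, mul_one, map_add, map_sub,
    map_mul, map_one, map_ofNat]
  ring

end Reflections

theorem star_mul_self_one_div_sqrt_natCast (N : ℕ) :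
    star (1 / (Real.sqrt N : ℂ)) * (1 / (Real.sqrt N : ℂ)) = 1 / (N : ℂ) := by
  have hsqrt : (Real.sqrt N : ℂ) * (Real.sqrt N : ℂ) = N := by
    exact_mod_cast Real.mul_self_sqrt N.cast_nonneg
  simp [← mul_inv, hsqrt]

theorem stmt_15_general {R n : Type*} [CommRing R] [StarRing R] [Fintype n] [DecidableEq n]
    (hn : 2 ≤ Fintype.card n) (x : n) {ψ : n → R} (hψ : star ψ ⬝ᵥ ψ = 1) :
    ((2 • vecMulVec ψ (star ψ) - 1) *
        (2 • vecMulVec (Pi.single x 1) (star (Pi.single x (1 : R))) - 1)).charpoly =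
      (X - 1) ^ (Fintype.card n - 2) *
        (X ^ 2 + C (2 * (1 - 2 * (star (ψ x) * ψ x))) * X + 1) := by
  have hsingle : star (Pi.single x (1 : R)) = (Pi.single x 1 : n → R) := by
    rw [← Pi.single_star, star_one]
  rw [hsingle, charpoly_reflection_mul_reflection hn hψ (by simp), dotProduct_single_one,
    single_one_dotProduct, Pi.star_apply]

/-- Let `ψ₀` be the uniform superposition in `ℂ^N`, `x` a marked index, and
`G = (2|ψ₀⟩⟨ψ₀| − I)(2|e_x⟩⟨e_x| − I)` (the Grover iteration up to a global sign), realized as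
an `N × N` complex matrix, where `|v⟩⟨v|` is the matrix `v ᵥ* (star v)`. Then the
characteristic polynomial of `G` equals `(λ − 1)^{N−2} (λ² + 2(1 − 2/N) λ + 1)`. -/
theorem stmt_15 (N : ℕ) (hN : 2 ≤ N) (x : Fin N)
    (ψ₀ : Fin N → ℂ) (hψ₀ : ψ₀ = fun _ => (1 : ℂ) / (Real.sqrt N : ℂ))
    (G : Matrix (Fin N) (Fin N) ℂ)
    (hG : G = (2 • vecMulVec ψ₀ (star ψ₀) - 1) *
              (2 • vecMulVec (Pi.single x 1) (star (Pi.single x (1 : ℂ))) - 1)) :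
    G.charpoly = (X - 1) ^ (N - 2) *
      (X ^ 2 + C (2 * (1 - 2 / (N : ℂ))) * X + 1) := by
  have hoverlap (k : Fin N) : star (ψ₀ k) * ψ₀ k = 1 / (N : ℂ) := by
    rw [hψ₀, star_mul_self_one_div_sqrt_natCast]
  have hunit : star ψ₀ ⬝ᵥ ψ₀ = 1 := by
    have hN0 : (N : ℂ) ≠ 0 := by exact_mod_cast (by lia : N ≠ 0)
    simp only [dotProduct, Pi.star_apply, hoverlap]
    simp [hN0]
  rw [hG, stmt_15_general (by simpa using hN) x hunit, hoverlap, Fintype.card_fin, mul_one_div]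
end

section
/- Let N > 4, let x ∈ {0, 1, …, N−1}, let ψ₀ = (1/√N) Σ_{k=0}^{N−1} e_k in ℂ^N, and let G = (2|ψ₀⟩⟨ψ₀| − I)(2|e_x⟩⟨e_x| − I). Then for any two eigenvalues λ and μ of G, if (λ/μ)^n = 1 for some integer n ≥ 1 then λ = μ. (Consequently the integer p in the debugging construction equals 1 for this process.) -/
open Polynomial Matrix

/-!
Up to two signs that cancel, `G` is a product `s_f s_g` of reflections, `s_f v = v - f v • x` and
`s_g v = v - g v • y`. If `v` is an eigenvector of it with eigenvalue `lam`, then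
`s_g v = lam • s_f v` since `s_f` is an involution, and applying `f` and `g` gives `lam = 1` or
`(lam + 1) ^ 2 = t * lam` with `t = f y * g x`. The two roots of this quadratic have product `1`, so
if the ratio of two distinct eigenvalues is a root of unity then so is a root of the quadratic, and
`t` is an algebraic integer. For the Grover iteration, `t = 4 / N`.
-/

section Reflection

open Module

variable {R M : Type*} [CommRing R] [IsDomain R] [AddCommGroup M] [Module R M] [IsTorsionFree R M]
  {x y : M} {f g : Dual R M}

lemma eq_one_or_add_one_sq_eq_mul_of_hasEigenvalue_reflection_comp (hf : f x = 2) (hg : g y = 2)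
    {lam : R} (h : End.HasEigenvalue
      ((reflection hf).toLinearMap ∘ₗ (reflection hg).toLinearMap) lam) :
    lam = 1 ∨ (lam + 1) ^ 2 = f y * g x * lam := by
  obtain ⟨v, hv⟩ := h.exists_hasEigenvector
  have hrefl : v - g v • y = lam • (v - f v • x) := by
    rw [← reflection_apply v hg, ← reflection_apply v hf, ← map_smul]
    exact (involutive_reflection hf).eq_iff.mp hv.apply_eq_smul
  have hfv : (lam + 1) * f v = f y * g v := by
    have := congr(f $hrefl)
    simp only [map_sub, map_smul, smul_eq_mul, hf] at this
    linear_combination this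
  have hgv : (lam + 1) * g v = lam * g x * f v := by
    have := congr(g $hrefl)
    simp only [map_sub, map_smul, smul_eq_mul, hg] at this
    linear_combination -this
  by_cases hf0 : f v = 0
  · by_cases hg0 : g v = 0
    · left
      refine smul_left_injective R hv.2 ?_
      simpa [hf0, hg0] using hrefl.symm
    · right
      refine mul_right_cancel₀ hg0 ?_
      linear_combination (lam + 1) * hgv + lam * g x * hfv
  · right
    refine mul_right_cancel₀ hf0 ?_
    linear_combination (lam + 1) * hfv + f y * hgv

end Reflection

section RootsOfUnity

lemma isIntegral_of_isOfFinOrder_of_add_one_sq_eq_mul {A : Type*} [CommRing A] {z t : A}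
    (hz : IsOfFinOrder z) (h : (z + 1) ^ 2 = t * z) : IsIntegral ℤ t := by
  obtain ⟨n, hn, hzn⟩ := hz.exists_pow_eq_one
  have hint : IsIntegral ℤ z := .of_pow hn (hzn ▸ isIntegral_one)
  have ht : t = (z + 1) ^ 2 * z ^ (n - 1) := by
    rw [h, mul_assoc, mul_pow_sub_one hn.ne', hzn, mul_one]
  exact ht ▸ ((hint.add isIntegral_one).pow 2).mul (hint.pow (n - 1))

lemma mul_eq_one_of_add_one_sq_eq_mul {A : Type*} [CommRing A] [IsDomain A] {z w t : A}
    (hz : (z + 1) ^ 2 = t * z) (hw : (w + 1) ^ 2 = t * w) (hne : z ≠ w) : z * w = 1 := by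
  refine mul_left_cancel₀ (sub_ne_zero.mpr hne) ?_
  linear_combination w * hz - z * hw

lemma eq_of_isOfFinOrder_div {K : Type*} [Field K] {z w t : K} (ht : ¬ IsIntegral ℤ t)
    (hz : z = 1 ∨ (z + 1) ^ 2 = t * z) (hw : w = 1 ∨ (w + 1) ^ 2 = t * w)
    (h : IsOfFinOrder (z / w)) : z = w := by
  have not_finOrder {u : K} (hu : (u + 1) ^ 2 = t * u) : ¬ IsOfFinOrder u :=
    fun hfin => ht (isIntegral_of_isOfFinOrder_of_add_one_sq_eq_mul hfin hu)
  rcases hz with rfl | hz <;> rcases hw with rfl | hw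
  · rfl
  · exact absurd (by simpa [isOfFinOrder_iff_pow_eq_one] using h) (not_finOrder hw)
  · exact absurd (by simpa using h) (not_finOrder hz)
  · by_contra hne
    have hsq : z / w = z ^ 2 := by
      rw [div_eq_mul_inv, inv_eq_of_mul_eq_one_left (mul_eq_one_of_add_one_sq_eq_mul hz hw hne), sq]
    exact not_finOrder hz ((isOfFinOrder_pow.mp (hsq ▸ h)).resolve_right two_ne_zero)

end RootsOfUnity

lemma isIntegral_intCast_div_intCast_iff {K : Type*} [Field K] [CharZero K] (m : ℤ) {n : ℤ}
    (hn : n ≠ 0) : IsIntegral ℤ (m / n : K) ↔ n ∣ m := by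
  have hcast : (m / n : K) = algebraMap ℚ K (m / n) := by simp
  have hn' : (n : ℚ) ≠ 0 := Int.cast_ne_zero.mpr hn
  rw [hcast, isIntegral_algebraMap_iff (algebraMap ℚ K).injective,
    IsIntegrallyClosed.isIntegral_iff, dvd_iff_exists_eq_mul_left]
  refine exists_congr fun k => ?_
  rw [eq_intCast, eq_div_iff hn', eq_comm]
  norm_cast

section Matrix

variable {ι : Type*} [Fintype ι] [DecidableEq ι]

lemma toLin'_two_smul_vecMulVec_sub_one {R : Type*} [CommRing R] {a b : ι → R}
    (h : (2 • dotProductEquiv R ι b) a = 2) :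
    toLin' (2 • vecMulVec a b - 1) = -(Module.reflection h).toLinearMap := by
  refine LinearMap.ext fun v => ?_
  simp only [toLin'_apply, sub_mulVec, smul_mulVec, vecMulVec_mulVec, one_mulVec, op_smul_eq_smul,
    LinearMap.neg_apply, LinearEquiv.coe_coe, Module.reflection_apply, LinearMap.smul_apply,
    dotProductEquiv_apply_apply, smul_assoc, neg_sub]

lemma eq_one_or_add_one_sq_eq_mul_of_isRoot_charpoly_vecMulVec {R : Type*} [CommRing R]
    [IsDomain R] {a b c d : ι → R} (hab : b ⬝ᵥ a = 1) (hcd : d ⬝ᵥ c = 1) {z : R}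
    (hz : ((2 • vecMulVec a b - 1) * (2 • vecMulVec c d - 1)).charpoly.IsRoot z) :
    z = 1 ∨ (z + 1) ^ 2 = 4 * ((b ⬝ᵥ c) * (d ⬝ᵥ a)) * z := by
  have hf : (2 • dotProductEquiv R ι b) a = 2 := by simp [hab]
  have hg : (2 • dotProductEquiv R ι d) c = 2 := by simp [hcd]
  have ht : (2 • dotProductEquiv R ι b) c * (2 • dotProductEquiv R ι d) a =
      4 * ((b ⬝ᵥ c) * (d ⬝ᵥ a)) := by
    simp only [LinearMap.smul_apply, dotProductEquiv_apply_apply, nsmul_eq_mul]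
    ring
  rw [← charpoly_toLin', ← Module.End.hasEigenvalue_iff_isRoot_charpoly, toLin'_mul,
    toLin'_two_smul_vecMulVec_sub_one hf, toLin'_two_smul_vecMulVec_sub_one hg,
    LinearMap.neg_comp, LinearMap.comp_neg, neg_neg] at hz
  exact ht ▸ eq_one_or_add_one_sq_eq_mul_of_hasEigenvalue_reflection_comp hf hg hz

theorem stmt_16_general {K : Type*} [Field K] {a b c d : ι → K} (hab : b ⬝ᵥ a = 1)
    (hcd : d ⬝ᵥ c = 1) (ht : ¬ IsIntegral ℤ (4 * ((b ⬝ᵥ c) * (d ⬝ᵥ a)))) {lam mu : K}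
    (hlam : ((2 • vecMulVec a b - 1) * (2 • vecMulVec c d - 1)).charpoly.IsRoot lam)
    (hmu : ((2 • vecMulVec a b - 1) * (2 • vecMulVec c d - 1)).charpoly.IsRoot mu)
    (h : IsOfFinOrder (lam / mu)) : lam = mu :=
  eq_of_isOfFinOrder_div ht (eq_one_or_add_one_sq_eq_mul_of_isRoot_charpoly_vecMulVec hab hcd hlam)
    (eq_one_or_add_one_sq_eq_mul_of_isRoot_charpoly_vecMulVec hab hcd hmu) h

end Matrix

section UniformState

variable {ι : Type*} [Fintype ι]

variable (ι) in
/-- The uniform superposition of the standard basis vectors, the initial state of Grover's search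
on the index set `ι`. -/
noncomputable def uniformState : ι → ℂ :=
  fun _ => 1 / (Real.sqrt (Fintype.card ι) : ℂ)

lemma star_uniformState : star (uniformState ι) = uniformState ι := by
  ext
  simp [uniformState]

lemma uniformState_mul_uniformState (i j : ι) :
    uniformState ι i * uniformState ι j = 1 / Fintype.card ι := by
  simp only [uniformState]
  rw [div_mul_div_comm, one_mul, ← Complex.ofReal_mul,
    Real.mul_self_sqrt (Nat.cast_nonneg _), Complex.ofReal_natCast]

lemma star_uniformState_dotProduct_self [Nonempty ι] :
    star (uniformState ι) ⬝ᵥ uniformState ι = 1 := by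
  rw [star_uniformState]
  simp [dotProduct, uniformState_mul_uniformState]

lemma uniformState_overlap_single [DecidableEq ι] (x : ι) :
    (star (uniformState ι) ⬝ᵥ Pi.single x 1) * (star (Pi.single x (1 : ℂ)) ⬝ᵥ uniformState ι) =
      1 / Fintype.card ι := by
  simp [star_uniformState, ← uniformState_mul_uniformState x x]

end UniformState

/-- For `N > 4`, let `G = (2|ψ₀⟩⟨ψ₀| − I)(2|e_x⟩⟨e_x| − I)` be the Grover
iteration (up to a global sign) on `ℂ^N`, realized as an `N × N` complex matrix. Then for any
two eigenvalues `λ, μ` of `G` (roots of its characteristic polynomial), if `(λ/μ)^n = 1` for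
some `n ≥ 1` then `λ = μ`. -/
theorem stmt_16 (N : ℕ) (hN : 4 < N) (x : Fin N)
    (ψ₀ : Fin N → ℂ) (hψ₀ : ψ₀ = fun _ => (1 : ℂ) / (Real.sqrt N : ℂ))
    (G : Matrix (Fin N) (Fin N) ℂ)
    (hG : G = (2 • vecMulVec ψ₀ (star ψ₀) - 1) *
              (2 • vecMulVec (Pi.single x 1) (star (Pi.single x (1 : ℂ))) - 1)) :
    ∀ lam mu : ℂ, G.charpoly.IsRoot lam → G.charpoly.IsRoot mu →
      (∃ n : ℕ, 1 ≤ n ∧ (lam / mu) ^ n = 1) → lam = mu := by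
  have : Nonempty (Fin N) := ⟨x⟩
  have hψ : ψ₀ = uniformState (Fin N) := by ext; simp [hψ₀, uniformState]
  have hdvd : ¬ (N : ℤ) ∣ 4 := mod_cast Nat.not_dvd_of_pos_of_lt four_pos hN
  have ht : ¬ IsIntegral ℤ (4 * (1 / Fintype.card (Fin N)) : ℂ) := by
    simpa [div_eq_mul_inv] using
      (isIntegral_intCast_div_intCast_iff (K := ℂ) 4 (by omega)).not.mpr hdvd
  subst hG hψ
  intro lam mu hlam hmu hpow
  exact stmt_16_general star_uniformState_dotProduct_self (by simp)
    (uniformState_overlap_single x ▸ ht) hlam hmu (isOfFinOrder_iff_pow_eq_one.mpr hpow)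
end
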